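/- arXiv:1905.06031 — 5 statements merged into one kernel-verified Lean document; each statement's English description precedes it below -/
import Mathlib

section
/- Let 𝒢 be a class of finite simple graphs that is closed under contraction of edges, and suppose that every graph in 𝒢 has clique number at most k. Then every graph G ∈ 𝒢 of maximum degree Δ has strong clique number ω₂'(G) ≤ k(Δ+1). -/
/-!
Contracting the edges of a matching contained in a strong clique produces pairwise adjacent
vertices, so every matching inside `S` has at most `k` edges (`matching_card_le`, via
`blob_card_le`). It remains to find a matching with at least `|S| / (Δ + 1)` edges
(`exists_large_matching`); this also follows from Vizing's theorem, but a Gallai-type exchange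
argument is enough.

If some vertex `v` is covered by every maximum matching of `S`, delete the at most `Δ` edges at `v`:
the matching number drops, and induction applies. Otherwise every vertex is missed by some
maximum matching, and then two vertices missed by the same maximum matching `M` have no common
neighbour (`no_common_neighbour`). So each vertex `v` covered by `M` lies on at most `Δ` edges, at
most one of which has its other end missed by `M`. Counting the edges of the latter kind twice, and
using that no edge has both ends missed, gives `2 |S| ≤ 2 |M| (Δ + 1)`.
-/

/-- `H` is obtained from `G` by contracting one edge: the two endpoints of some edge of `G`
are identified, resulting loops and parallel edges being suppressed. -/
def IsEdgeContraction {V W : Type} (G : SimpleGraph V) (H : SimpleGraph W) : Prop :=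
  ∃ (φ : V → W) (u v : V), G.Adj u v ∧ φ u = φ v ∧ Function.Surjective φ ∧
    (∀ a b : V, φ a = φ b → a ≠ b → (a = u ∧ b = v) ∨ (a = v ∧ b = u)) ∧
    (∀ x y : W, H.Adj x y ↔ x ≠ y ∧ ∃ a b : V, φ a = x ∧ φ b = y ∧ G.Adj a b)

/-- A strong clique of `G`: a set of edges of `G` every two of which are incident or
joined by an edge of `G`. -/
def IsStrongCliqueSet {α : Type} (G : SimpleGraph α) (S : Set (Sym2 α)) : Prop :=
  S ⊆ G.edgeSet ∧
    ∀ e ∈ S, ∀ f ∈ S, e ≠ f →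
      (∃ x, x ∈ e ∧ x ∈ f) ∨ ∃ x y, x ∈ e ∧ y ∈ f ∧ G.Adj x y

open Finset Classical in
/-- The vertices covered by a set of edges. -/
noncomputable def coveredVerts {V : Type} [Fintype V] (M : Finset (Sym2 V)) : Finset V :=
  univ.filter fun v => ∃ e ∈ M, v ∈ e

/-- `M` is a set of pairwise disjoint edges taken from `S`. -/
def IsMatchingIn {V : Type} (S M : Finset (Sym2 V)) : Prop :=
  M ⊆ S ∧ ∀ e ∈ M, ∀ f ∈ M, ∀ v, v ∈ e → v ∈ f → e = f

/-- `M` is a matching in `S` of maximum cardinality. -/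
def IsMaxMatchingIn {V : Type} (S M : Finset (Sym2 V)) : Prop :=
  IsMatchingIn S M ∧ ∀ N, IsMatchingIn S N → N.card ≤ M.card

/-! ### Large matchings in graphs of bounded degree -/

section Matching

open Finset Classical

variable {V : Type} [Fintype V]

lemma mem_coveredVerts {M : Finset (Sym2 V)} {v : V} :
    v ∈ coveredVerts M ↔ ∃ e ∈ M, v ∈ e := by
  simp [coveredVerts]

lemma card_coveredVerts {S M : Finset (Sym2 V)} (hS : ∀ e ∈ S, ¬ e.IsDiag)
    (hM : IsMatchingIn S M) : (coveredVerts M).card = 2 * M.card := by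
  have h : coveredVerts M = M.biUnion fun e => e.toFinset := by
    ext v; simp [mem_coveredVerts]
  rw [h, card_biUnion]
  · rw [sum_congr rfl fun e he => Sym2.card_toFinset_of_not_isDiag e (hS e (hM.1 he))]
    simp [mul_comm]
  · intro e he f hf hne
    refine Finset.disjoint_left.2 ?_
    intro v hv hv'
    exact hne (hM.2 e he f hf v (by simpa using hv) (by simpa using hv'))

lemma exists_isMaxMatchingIn (S : Finset (Sym2 V)) : ∃ M, IsMaxMatchingIn S M := by
  have hne : (S.powerset.filter fun M => IsMatchingIn S M).Nonempty :=
    ⟨∅, mem_filter.2 ⟨by simp, by simp [IsMatchingIn]⟩⟩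
  obtain ⟨M, hM, hmax⟩ := exists_max_image _ card hne
  refine ⟨M, (mem_filter.1 hM).2, fun N hN => hmax N ?_⟩
  simp [hN, hN.1]

/-- An edge of `S` cannot have both ends missed by a maximum matching. -/
lemma IsMaxMatchingIn.mem_covered_of_edge {S M : Finset (Sym2 V)} (hM : IsMaxMatchingIn S M)
    {x y : V} (he : s(x, y) ∈ S) (hx : x ∉ coveredVerts M) : y ∈ coveredVerts M := by
  by_contra hy
  rw [mem_coveredVerts] at hx hy
  push Not at hx hy
  have hnot : s(x, y) ∉ M := fun h => hx _ h (by simp)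
  have hmis : ∀ g ∈ M, ∀ v, v ∈ s(x, y) → v ∉ g := by
    intro g hg v hv
    rcases Sym2.mem_iff.1 hv with rfl | rfl
    · exact hx g hg
    · exact hy g hg
  have := hM.2 (insert s(x, y) M) ⟨insert_subset he hM.1.1, by
    intro e he f hf v hve hvf
    rcases mem_insert.1 he with rfl | he <;> rcases mem_insert.1 hf with rfl | hf
    · rfl
    · exact absurd hvf (hmis f hf v hve)
    · exact absurd hve (hmis e he v hvf)
    · exact hM.1.2 e he f hf v hve hvf⟩
  rw [card_insert_of_notMem hnot] at this
  omega

/-- The exchange step of Gallai's lemma. If `t` is missed by some maximum matching, then a maximum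
matching does not miss two distinct neighbours `u`, `v` of `t`. Otherwise take a maximum matching
`N` missing `t` and sharing as many edges as possible with `M`; it covers `u` and `v`, so by counting
`N` misses some `x ≠ t` covered by `M`, and the `M`-edge at `x` can be swapped into `N`. -/
lemma no_common_neighbour {S M N₀ : Finset (Sym2 V)} (hS : ∀ e ∈ S, ¬ e.IsDiag)
    (hM : IsMaxMatchingIn S M) (hN₀ : IsMaxMatchingIn S N₀) {t u v : V}
    (ht : t ∉ coveredVerts N₀) (hut : s(t, u) ∈ S) (hvt : s(t, v) ∈ S)
    (hu : u ∉ coveredVerts M) (hv : v ∉ coveredVerts M) : u = v := by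
  by_contra huv
  have hne : (S.powerset.filter fun N => IsMaxMatchingIn S N ∧ t ∉ coveredVerts N).Nonempty :=
    ⟨N₀, by simp [hN₀, hN₀.1.1, ht]⟩
  obtain ⟨N, hN, hmax⟩ := exists_max_image _ (fun N => (M ∩ N).card) hne
  obtain ⟨-, hN, htN⟩ := mem_filter.1 hN
  have huN : u ∈ coveredVerts N := hN.mem_covered_of_edge hut htN
  have hvN : v ∈ coveredVerts N := hN.mem_covered_of_edge hvt htN
  have hMN : M.card = N.card := le_antisymm (hN.2 M hM.1) (hM.2 N hN.1)
  have hcard : (coveredVerts M).card = (coveredVerts N).card := by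
    rw [card_coveredVerts hS hM.1, card_coveredVerts hS hN.1, hMN]
  have h2 : 1 < (coveredVerts M \ coveredVerts N).card := by
    rw [card_sdiff_comm hcard, one_lt_card]
    exact ⟨u, by simp [huN, hu], v, by simp [hvN, hv], huv⟩
  obtain ⟨x, hx, hxt⟩ := exists_mem_ne h2 t
  obtain ⟨hxM, hxN⟩ := mem_sdiff.1 hx
  obtain ⟨e, heM, hxe⟩ := mem_coveredVerts.1 hxM
  obtain ⟨y, rfl⟩ := Sym2.mem_iff_exists.1 hxe
  have hyN := hN.mem_covered_of_edge (hM.1.1 heM) hxN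
  obtain ⟨f, hfN, hyf⟩ := mem_coveredVerts.1 hyN
  have hyt : y ≠ t := fun h => htN (h ▸ hyN)
  have hxN' : ∀ g ∈ N, x ∉ g := fun g hg hxg => hxN (mem_coveredVerts.2 ⟨g, hg, hxg⟩)
  have htN' : ∀ g ∈ N, t ∉ g := fun g hg hxg => htN (mem_coveredVerts.2 ⟨g, hg, hxg⟩)
  have heN : s(x, y) ∉ N := fun h => hxN' _ h hxe
  have hfM : f ∉ M := fun h => by
    have := hM.1.2 _ heM f h y (by simp) hyf
    exact heN (this ▸ hfN)
  have hdisj : ∀ g ∈ N.erase f, ∀ w, w ∈ s(x, y) → w ∉ g := by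
    intro g hg w hw hwg
    obtain ⟨hgf, hgN⟩ := mem_erase.1 hg
    rcases Sym2.mem_iff.1 hw with rfl | rfl
    · exact hxN' g hgN hwg
    · exact hgf (hN.1.2 g hgN f hfN _ hwg hyf)
  have hN'm : IsMatchingIn S (insert s(x, y) (N.erase f)) := by
    refine ⟨insert_subset (hM.1.1 heM) ((erase_subset _ _).trans hN.1.1), ?_⟩
    intro a ha b hb w hwa hwb
    rcases mem_insert.1 ha with rfl | ha <;> rcases mem_insert.1 hb with rfl | hb
    · rfl
    · exact absurd hwb (hdisj b hb w hwa)
    · exact absurd hwa (hdisj a ha w hwb)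
    · exact hN.1.2 a (mem_of_mem_erase ha) b (mem_of_mem_erase hb) w hwa hwb
  have hN'c : (insert s(x, y) (N.erase f)).card = N.card := by
    rw [card_insert_of_notMem (fun h => heN (mem_of_mem_erase h)), card_erase_add_one hfN]
  have hN't : t ∉ coveredVerts (insert s(x, y) (N.erase f)) := by
    rw [mem_coveredVerts]
    rintro ⟨g, hg, htg⟩
    rcases mem_insert.1 hg with rfl | hg
    · rcases Sym2.mem_iff.1 htg with h | h
      · exact hxt h.symm
      · exact hyt h.symm
    · exact htN' g (mem_of_mem_erase hg) htg
  have hle := hmax (insert s(x, y) (N.erase f)) (by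
    simp only [mem_filter, mem_powerset]
    exact ⟨hN'm.1, ⟨hN'm, fun K hK => hN'c ▸ hN.2 K hK⟩, hN't⟩)
  have hsub : insert s(x, y) (M ∩ N) ⊆ M ∩ insert s(x, y) (N.erase f) := by
    intro g hg
    rcases mem_insert.1 hg with rfl | hg
    · simp [heM]
    · obtain ⟨hgM, hgN⟩ := mem_inter.1 hg
      have hgf : g ≠ f := fun h => hfM (h ▸ hgM)
      simp [hgM, hgN, hgf]
  have hlt := card_le_card hsub
  rw [card_insert_of_notMem (fun h => heN (mem_inter.1 h).2)] at hlt
  omega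

/-- The counting bound when every vertex is missed by some maximum matching. -/
lemma card_le_of_all_missed {S M : Finset (Sym2 V)} {Δ : ℕ} (hS : ∀ e ∈ S, ¬ e.IsDiag)
    (hdeg : ∀ v, (S.filter fun e => v ∈ e).card ≤ Δ) (hM : IsMaxMatchingIn S M)
    (hmiss : ∀ t, ∃ N, IsMaxMatchingIn S N ∧ t ∉ coveredVerts N) :
    S.card ≤ M.card * (Δ + 1) := by
  -- `T` consists of the edges of `S` having an end missed by `M`.
  set T := S.filter fun e => ∃ w ∈ e, w ∉ coveredVerts M with hT
  have hT1 : ∀ v ∈ coveredVerts M, (T.filter fun e => v ∈ e).card ≤ 1 := by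
    intro v hv
    rw [card_le_one]
    intro a ha b hb
    simp only [hT, mem_filter] at ha hb
    obtain ⟨⟨haS, w, hwa, hwM⟩, hva⟩ := ha
    obtain ⟨⟨hbS, w', hwb, hwM'⟩, hvb⟩ := hb
    have ha' : a = s(v, w) := (Sym2.mem_and_mem_iff (by rintro rfl; exact hwM hv)).1 ⟨hva, hwa⟩
    have hb' : b = s(v, w') := (Sym2.mem_and_mem_iff (by rintro rfl; exact hwM' hv)).1 ⟨hvb, hwb⟩
    obtain ⟨N, hN, hvN⟩ := hmiss v
    rw [ha', hb', no_common_neighbour hS hM hN hvN (ha' ▸ haS) (hb' ▸ hbS) hwM hwM']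
  have hedge : ∀ e ∈ S, 2 ≤ ((coveredVerts M).filter fun v => v ∈ e).card +
      if e ∈ T then ((coveredVerts M).filter fun v => v ∈ e).card else 0 := by
    intro e he
    by_cases heT : e ∈ T
    · rw [if_pos heT]
      obtain ⟨-, w, hwe, hw⟩ := mem_filter.1 heT
      obtain ⟨y, rfl⟩ := Sym2.mem_iff_exists.1 hwe
      have : 0 < ((coveredVerts M).filter fun v => v ∈ s(w, y)).card :=
        card_pos.2 ⟨y, by simp [hM.mem_covered_of_edge he hw]⟩
      omega
    · rw [if_neg heT]
      have h : ∀ w ∈ e, w ∈ coveredVerts M := by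
        intro w hw
        by_contra hc
        exact heT (mem_filter.2 ⟨he, w, hw, hc⟩)
      have : e.toFinset ⊆ (coveredVerts M).filter fun v => v ∈ e := by
        intro w hw
        have hw : w ∈ e := by simpa using hw
        simp [hw, h w hw]
      have := card_le_card this
      rw [Sym2.card_toFinset_of_not_isDiag e (hS e he)] at this
      omega
  have hswap : ∀ R : Finset (Sym2 V), ∑ e ∈ R, ((coveredVerts M).filter fun v => v ∈ e).card
      = ∑ v ∈ coveredVerts M, (R.filter fun e => v ∈ e).card := fun R =>
    (sum_card_bipartiteAbove_eq_sum_card_bipartiteBelow (s := coveredVerts M) (t := R)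
      (fun v e => v ∈ e)).symm
  have hsum := sum_le_sum hedge
  rw [sum_add_distrib, ← sum_filter, hswap, filter_mem_eq_inter,
    inter_eq_right.2 (filter_subset _ _ : T ⊆ S), hswap, ← sum_add_distrib] at hsum
  have hbound : ∑ v ∈ coveredVerts M, ((S.filter fun e => v ∈ e).card +
      (T.filter fun e => v ∈ e).card) ≤ ∑ _v ∈ coveredVerts M, (Δ + 1) :=
    sum_le_sum fun v hv => add_le_add (hdeg v) (hT1 v hv)
  have := hsum.trans hbound
  simp only [sum_const, smul_eq_mul, card_coveredVerts hS hM.1] at this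
  nlinarith

lemma exists_large_matching (Δ : ℕ) (S : Finset (Sym2 V)) (hS : ∀ e ∈ S, ¬ e.IsDiag)
    (hdeg : ∀ v, (S.filter fun e => v ∈ e).card ≤ Δ) :
    ∃ M, IsMatchingIn S M ∧ S.card ≤ M.card * (Δ + 1) := by
  induction S using Finset.strongInduction with
  | H S ih =>
  obtain ⟨M, hM⟩ := exists_isMaxMatchingIn S
  refine ⟨M, hM.1, ?_⟩
  by_cases hmiss : ∀ t, ∃ N, IsMaxMatchingIn S N ∧ t ∉ coveredVerts N
  · exact card_le_of_all_missed hS hdeg hM hmiss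
  push Not at hmiss
  obtain ⟨v, hv⟩ := hmiss
  obtain ⟨e, heM, hve⟩ := mem_coveredVerts.1 (hv M hM)
  have hss : S.filter (fun e => v ∉ e) ⊂ S := by
    refine (filter_ssubset).2 ⟨e, hM.1.1 heM, by simpa using hve⟩
  obtain ⟨N, hN, hNc⟩ := ih _ hss (fun e he => hS e (hss.1 he)) (fun w =>
    (card_le_card (filter_subset_filter _ hss.1)).trans (hdeg w))
  have hNS : IsMatchingIn S N := ⟨hN.1.trans hss.1, hN.2⟩
  have hlt : N.card < M.card := by
    by_contra hc
    have hNmax : IsMaxMatchingIn S N := ⟨hNS, fun K hK => (hM.2 K hK).trans (not_lt.1 hc)⟩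
    obtain ⟨f, hfN, hvf⟩ := mem_coveredVerts.1 (hv N hNmax)
    exact (mem_filter.1 (hN.1 hfN)).2 hvf
  have hsplit := card_filter_add_card_filter_not (s := S) (fun e => v ∈ e)
  have := hdeg v
  have h3 : (N.card + 1) * (Δ + 1) ≤ M.card * (Δ + 1) := Nat.mul_le_mul_right _ hlt
  nlinarith

end Matching

/-! ### Contracting a matching -/

section Contraction

open Classical

/-- Contract the edge `uv` onto `u`: the vertex `v` is removed and sent to `u`. -/
noncomputable def contractMap {V : Type} (u v : V) (huv : u ≠ v) (x : V) : {w : V // w ≠ v} :=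
  if h : x = v then ⟨u, huv⟩ else ⟨x, h⟩

lemma contractMap_eq_iff {V : Type} {u v : V} (huv : u ≠ v) {x y : V} :
    contractMap u v huv x = contractMap u v huv y ↔
      x = y ∨ (x = u ∧ y = v) ∨ (x = v ∧ y = u) := by
  unfold contractMap
  by_cases hx : x = v <;> by_cases hy : y = v <;> simp [hx, hy] <;> grind

/-- The graph obtained from `G` by identifying vertices along `contractMap`, with loops and parallel
edges suppressed. -/
def contractGraph {V : Type} (G : SimpleGraph V) (u v : V) (huv : u ≠ v) :
    SimpleGraph {w : V // w ≠ v} where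
  Adj x y := x ≠ y ∧ ∃ a b : V, contractMap u v huv a = x ∧ contractMap u v huv b = y ∧ G.Adj a b
  symm := ⟨fun _ _ ⟨h, a, b, ha, hb, hab⟩ => ⟨h.symm, b, a, hb, ha, hab.symm⟩⟩
  loopless := ⟨fun _ h => h.1 rfl⟩

lemma isEdgeContraction_contractGraph {V : Type} (G : SimpleGraph V) {u v : V} (h : G.Adj u v) :
    IsEdgeContraction G (contractGraph G u v h.ne) := by
  refine ⟨contractMap u v h.ne, u, v, h, ?_, ?_, ?_, fun _ _ => Iff.rfl⟩
  · rw [contractMap_eq_iff]; simp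
  · rintro ⟨w, hw⟩
    exact ⟨w, by simp [contractMap, hw]⟩
  · intro a b hab hne
    rw [contractMap_eq_iff] at hab
    exact hab.resolve_left hne

/-- Pairwise disjoint and pairwise adjacent blobs `{a i, b i}`, each a single vertex (`a i = b i`)
or an edge, number at most `k`: contract the blobs that are edges one at a time. -/
lemma blob_card_le (𝒢 : ∀ (V : Type) [Fintype V], SimpleGraph V → Prop)
    (hcontract : ∀ (V W : Type) [Fintype V] [Fintype W]
      (G : SimpleGraph V) (H : SimpleGraph W),
      𝒢 V G → IsEdgeContraction G H → 𝒢 W H)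
    (k : ℕ)
    (hclique : ∀ (V : Type) [Fintype V] (G : SimpleGraph V), 𝒢 V G →
      ∀ s : Finset V, G.IsClique (s : Set V) → s.card ≤ k)
    {ι : Type} [Fintype ι] (n : ℕ) :
    ∀ (V : Type) [Fintype V] (G : SimpleGraph V), 𝒢 V G → ∀ a b : ι → V,
      (∀ i, a i = b i ∨ G.Adj (a i) (b i)) →
      (∀ i j, i ≠ j → a i ≠ a j ∧ a i ≠ b j ∧ b i ≠ b j) →
      (∀ i j, i ≠ j → ∃ x y, (x = a i ∨ x = b i) ∧ (y = a j ∨ y = b j) ∧ G.Adj x y) →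
      (Finset.univ.filter fun i => a i ≠ b i).card = n → Fintype.card ι ≤ k := by
  induction n using Nat.strong_induction_on with
  | _ n ih =>
  intro V _ G hG a b hab hdisj hadj hn
  by_cases hall : ∀ i, a i = b i
  · have hinj : Function.Injective a := by
      intro i j hij
      by_contra hne
      exact (hdisj i j hne).1 hij
    have := hclique V G hG (Finset.univ.image a) (by
      intro x hx y hy hxy
      simp only [Finset.coe_image, Finset.coe_univ, Set.image_univ, Set.mem_range] at hx hy
      obtain ⟨i, rfl⟩ := hx
      obtain ⟨j, rfl⟩ := hy
      obtain ⟨x, y, hx, hy, h⟩ := hadj i j (fun h => hxy (h ▸ rfl))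
      rw [← hall, or_self] at hx hy
      rwa [← hx, ← hy])
    rwa [Finset.card_image_of_injective _ hinj, Finset.card_univ] at this
  push Not at hall
  obtain ⟨i₀, hi₀⟩ := hall
  have huv : G.Adj (a i₀) (b i₀) := (hab i₀).resolve_left hi₀
  set φ := contractMap (a i₀) (b i₀) huv.ne with hφ
  -- Vertices of different blobs are not identified.
  have hsep : ∀ i j, i ≠ j → ∀ x y, (x = a i ∨ x = b i) → (y = a j ∨ y = b j) → φ x ≠ φ y := by
    intro i j hij x y hx hy h
    rw [hφ, contractMap_eq_iff] at h
    have h1 := hdisj i j hij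
    have h2 := hdisj j i hij.symm
    have h3 := hdisj i i₀
    have h4 := hdisj j i₀
    have h5 := hdisj i₀ i
    have h6 := hdisj i₀ j
    grind
  refine ih _ ?_ {w : V // w ≠ b i₀} (contractGraph G (a i₀) (b i₀) huv.ne)
    (hcontract _ _ _ _ hG (isEdgeContraction_contractGraph G huv)) (φ ∘ a) (φ ∘ b) ?_ ?_ ?_ rfl
  · rw [← hn]
    apply Finset.card_lt_card
    refine ⟨?_, ?_⟩
    · intro i hi
      simp only [Finset.mem_filter, Finset.mem_univ, true_and, Function.comp] at hi ⊢
      exact fun h => hi (h ▸ rfl)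
    · intro hsub
      have := hsub (x := i₀) (by simpa using hi₀)
      simp only [Finset.mem_filter, Finset.mem_univ, true_and, Function.comp] at this
      exact this (by rw [hφ, contractMap_eq_iff]; simp)
  · intro i
    by_cases h : φ (a i) = φ (b i)
    · exact Or.inl h
    · refine Or.inr ⟨h, a i, b i, rfl, rfl, (hab i).resolve_left fun h' => h (h' ▸ rfl)⟩
  · intro i j hij
    exact ⟨hsep i j hij _ _ (.inl rfl) (.inl rfl), hsep i j hij _ _ (.inl rfl) (.inr rfl),
      hsep i j hij _ _ (.inr rfl) (.inr rfl)⟩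
  · intro i j hij
    obtain ⟨x, y, hx, hy, h⟩ := hadj i j hij
    refine ⟨φ x, φ y, ?_, ?_, hsep i j hij x y hx hy, x, y, rfl, rfl, h⟩
    · exact hx.imp (congrArg φ) (congrArg φ)
    · exact hy.imp (congrArg φ) (congrArg φ)

lemma matching_card_le (𝒢 : ∀ (V : Type) [Fintype V], SimpleGraph V → Prop)
    (hcontract : ∀ (V W : Type) [Fintype V] [Fintype W]
      (G : SimpleGraph V) (H : SimpleGraph W),
      𝒢 V G → IsEdgeContraction G H → 𝒢 W H)
    (k : ℕ)
    (hclique : ∀ (V : Type) [Fintype V] (G : SimpleGraph V), 𝒢 V G →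
      ∀ s : Finset V, G.IsClique (s : Set V) → s.card ≤ k)
    (V : Type) [Fintype V] (G : SimpleGraph V) (hG : 𝒢 V G)
    (S M : Finset (Sym2 V)) (hS : IsStrongCliqueSet G (S : Set (Sym2 V)))
    (hM : IsMatchingIn S M) : M.card ≤ k := by
  have hex : ∀ e : M, ∃ p : V × V, e.1 = s(p.1, p.2) := fun e => by
    obtain ⟨e, he⟩ := e
    induction e with
    | _ x y => exact ⟨(x, y), rfl⟩
  choose p hp using hex
  have hmem : ∀ e : M, ∀ x, x ∈ e.1 ↔ x = (p e).1 ∨ x = (p e).2 := fun e x => by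
    rw [hp e, Sym2.mem_iff]
  have hdis : ∀ e f : M, e ≠ f → ∀ x, x ∈ e.1 → x ∉ f.1 := fun e f hef x hx hy =>
    hef (Subtype.ext (hM.2 _ e.2 _ f.2 x hx hy))
  have := blob_card_le 𝒢 hcontract k hclique (ι := M) _ V G hG (fun e => (p e).1)
    (fun e => (p e).2) ?_ ?_ ?_ rfl
  · simpa using this
  · intro e
    have : e.1 ∈ G.edgeSet := hS.1 (hM.1 e.2)
    rw [hp e, SimpleGraph.mem_edgeSet] at this
    exact Or.inr this
  · intro e f hef
    have h := hdis e f hef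
    simp only [hmem] at h
    grind
  · intro e f hef
    rcases hS.2 e.1 (hM.1 e.2) f.1 (hM.1 f.2) (fun h => hef (Subtype.ext h)) with
      ⟨x, hx, hy⟩ | ⟨x, y, hx, hy, h⟩
    · exact absurd hy (hdis e f hef x hx)
    · exact ⟨x, y, (hmem e x).1 hx, (hmem f y).1 hy, h⟩

end Contraction

/-- If a class of finite simple graphs is closed under edge contraction and every graph in it
has clique number at most `k`, then every graph in the class of maximum degree `Δ` has
strong clique number at most `k * (Δ + 1)`. -/
theorem stmt_0 (𝒢 : ∀ (V : Type) [Fintype V], SimpleGraph V → Prop)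
    (hcontract : ∀ (V W : Type) [Fintype V] [Fintype W]
      (G : SimpleGraph V) (H : SimpleGraph W),
      𝒢 V G → IsEdgeContraction G H → 𝒢 W H)
    (k : ℕ)
    (hclique : ∀ (V : Type) [Fintype V] (G : SimpleGraph V), 𝒢 V G →
      ∀ s : Finset V, G.IsClique (s : Set V) → s.card ≤ k)
    (V : Type) [Fintype V] (G : SimpleGraph V) (hG : 𝒢 V G)
    (Δ : ℕ) (hΔ : ∀ v : V, (G.neighborSet v).ncard ≤ Δ)
    (S : Finset (Sym2 V)) (hS : IsStrongCliqueSet G (S : Set (Sym2 V))) :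
    S.card ≤ k * (Δ + 1) := by
  classical
  obtain ⟨M, hM, hcard⟩ := exists_large_matching Δ S
    (fun e he => G.not_isDiag_of_mem_edgeSet (hS.1 he)) (fun v => by
      refine le_trans ?_ (hΔ v)
      rw [← Set.ncard_coe_finset]
      have himg : ((S.filter fun e => v ∈ e : Finset (Sym2 V)) : Set (Sym2 V)) ⊆
          (fun w => s(v, w)) '' G.neighborSet v := by
        intro e he
        obtain ⟨heS, hve⟩ := Finset.mem_filter.1 he
        obtain ⟨w, rfl⟩ := Sym2.mem_iff_exists.1 hve
        exact ⟨w, hS.1 heS, rfl⟩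
      exact (Set.ncard_le_ncard himg (Set.toFinite _)).trans (Set.ncard_image_le (Set.toFinite _)))
  exact hcard.trans (Nat.mul_le_mul_right _
    (matching_card_le 𝒢 hcontract k hclique V G hG S M hS hM))
end

section
/- Let 𝒢 be a class of finite simple graphs that is closed under contraction of edges, and suppose that every graph in 𝒢 has fractional chromatic number at most c. Then every graph G ∈ 𝒢 of maximum degree Δ has fractional strong chromatic index χ'₂,f(G) ≤ c(Δ+1). -/
/-- The fractional chromatic number of `H`: the least total weight of a nonnegative weight
function on the stable sets of `H` such that every vertex receives total weight at least `1`
over the stable sets containing it. -/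
noncomputable def fracChrom {α : Type} (H : SimpleGraph α) : ℝ :=
  sInf { c : ℝ | ∃ (n : ℕ) (I : Fin n → Set α) (w : Fin n → ℝ),
    (∀ i, 0 ≤ w i) ∧
    (∀ i, ∀ u ∈ I i, ∀ v ∈ I i, ¬ H.Adj u v) ∧
    (∀ v : α, 1 ≤ ∑ i, Set.indicator (I i) (fun _ => w i) v) ∧
    c = ∑ i, w i }

/-- The square of the line graph of `G`: vertices are the edges of `G`, two distinct edges
being adjacent when they are incident or joined by an edge of `G`. -/
def lineSq {α : Type} (G : SimpleGraph α) : SimpleGraph G.edgeSet :=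
  SimpleGraph.fromRel fun e f =>
    (∃ x, x ∈ (e : Sym2 α) ∧ x ∈ (f : Sym2 α)) ∨
    ∃ x y, x ∈ (e : Sym2 α) ∧ y ∈ (f : Sym2 α) ∧ G.Adj x y

open Classical

/-! ### Partial edge colourings and Kempe swaps -/

/-- A connected graph of maximum degree two has at most two vertices of degree at most one, since
it has at least `n - 1` edges. -/
lemma three_leaves {V : Type} [Fintype V] (H : SimpleGraph V) (h2 : ∀ v, H.degree v ≤ 2)
    {u v w : V} (huv : u ≠ v) (huw : u ≠ w) (hvw : v ≠ w)
    (hu : H.degree u ≤ 1) (hv : H.degree v ≤ 1) (hw : H.degree w ≤ 1)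
    (ruv : H.Reachable u v) (ruw : H.Reachable u w) : False := by
  let K := H.connectedComponentMk u
  have hconn : (H.induce K.supp).Connected := K.connected_toSimpleGraph
  have h1 := hconn.card_vert_le_card_edgeSet_add_one
  have hs := (H.induce K.supp).sum_degrees_eq_twice_card_edges
  have hdeg : ∀ a : K.supp, (H.induce K.supp).degree a ≤ H.degree (a : V) := fun a => by
    rw [← SimpleGraph.card_neighborFinset_eq_degree, ← SimpleGraph.card_neighborFinset_eq_degree]
    refine Finset.card_le_card_of_injOn (fun z => (z : V)) ?_ ?_
    · intro z hz
      simpa using hz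
    · intro a _ b _ hab
      exact Subtype.ext hab
  let u' : K.supp := ⟨u, rfl⟩
  let v' : K.supp := ⟨v, SimpleGraph.ConnectedComponent.sound ruv.symm⟩
  let w' : K.supp := ⟨w, SimpleGraph.ConnectedComponent.sound ruw.symm⟩
  have hT : ({u', v', w'} : Finset K.supp).card = 3 := by
    rw [Finset.card_eq_three]
    exact ⟨u', v', w', fun e => huv (congrArg Subtype.val e), fun e => huw (congrArg Subtype.val e),
      fun e => hvw (congrArg Subtype.val e), rfl⟩
  have hsum : ∑ a : K.supp, ((H.induce K.supp).degree a
      + if a ∈ ({u', v', w'} : Finset K.supp) then 1 else 0) ≤ ∑ _a : K.supp, 2 := by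
    refine Finset.sum_le_sum fun a _ => ?_
    split_ifs with ha
    · simp only [Finset.mem_insert, Finset.mem_singleton] at ha
      have := hdeg a
      rcases ha with rfl | rfl | rfl <;> simp only [u', v', w'] at * <;> omega
    · exact (hdeg a).trans (h2 a)
  rw [Finset.sum_add_distrib, hs, Finset.sum_ite_mem, Finset.univ_inter] at hsum
  simp only [Finset.sum_const, hT, Finset.card_univ, smul_eq_mul] at hsum
  rw [Nat.card_eq_fintype_card, Nat.card_eq_fintype_card,
    ← SimpleGraph.edgeFinset_card] at h1
  omega

/-- `C` is a proper edge colouring of `G`; `C a b` is the colour of the edge `ab`, and `none` for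
non-edges. -/
structure FullCol {V κ : Type} (G : SimpleGraph V) (C : V → V → Option κ) : Prop where
  symm : ∀ a b, C a b = C b a
  adj : ∀ a b i, C a b = some i → G.Adj a b
  proper : ∀ a b c i, C a b = some i → C a c = some i → b = c
  total : ∀ a b, G.Adj a b → C a b ≠ none

/-- `C` is a proper partial edge colouring of `G` whose only uncoloured edge is `xy`. -/
structure PC {V κ : Type} (G : SimpleGraph V) (x y : V) (C : V → V → Option κ) : Prop where
  symm : ∀ a b, C a b = C b a
  adj : ∀ a b i, C a b = some i → G.Adj a b
  proper : ∀ a b c i, C a b = some i → C a c = some i → b = c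
  total : ∀ a b, G.Adj a b → C a b = none → (a = x ∧ b = y) ∨ (a = y ∧ b = x)
  none : C x y = none
  edge : G.Adj x y

lemma PC.extend {V κ : Type} {G : SimpleGraph V} {x y : V} {C : V → V → Option κ}
    (h : PC G x y C) (β : κ) (hx : ∀ b, C x b ≠ some β) (hy : ∀ b, C y b ≠ some β) :
    ∃ C' : V → V → Option κ, FullCol G C' := by
  have hxy := h.edge
  have hyx := h.edge.symm
  have hne := h.edge.ne
  obtain ⟨h1, h2, h3, h4, h5, -⟩ := h
  refine ⟨fun a b => if (a = x ∧ b = y) ∨ (a = y ∧ b = x) then some β else C a b, ?_, ?_, ?_, ?_⟩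
  · grind
  · grind
  · grind
  · grind

/-- The colouring obtained from `C` by giving `xy` the colour `β` and uncolouring `xz`. -/
noncomputable def moveCol {V κ : Type} (x y z : V) (β : κ) (C : V → V → Option κ) :
    V → V → Option κ := fun a b =>
  if (a = x ∧ b = y) ∨ (a = y ∧ b = x) then some β
  else if (a = x ∧ b = z) ∨ (a = z ∧ b = x) then none else C a b

lemma PC.move {V κ : Type} {G : SimpleGraph V} {x y z : V} {C : V → V → Option κ}
    (h : PC G x y C) (β : κ) (hy : ∀ b, C y b ≠ some β) (hz : C x z = some β) :
    PC G x z (moveCol x y z β C) := by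
  have hxy := h.edge
  have hyx := h.edge.symm
  have hne := h.edge.ne
  have hxz := h.adj _ _ _ hz
  have hne' := hxz.ne
  obtain ⟨h1, h2, h3, h4, h5, -⟩ := h
  refine ⟨?_, ?_, ?_, ?_, ?_, hxz⟩ <;> unfold moveCol
  · grind
  · grind
  · grind
  · grind
  · grind

/-- The graph of the edges coloured `α` or `β` that avoid `x`. -/
def kempeGraph {V κ : Type} (x : V) (α β : κ) (C : V → V → Option κ) : SimpleGraph V :=
  SimpleGraph.fromRel fun a b => a ≠ x ∧ b ≠ x ∧ (C a b = some α ∨ C a b = some β)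

/-- If `α` is missing at `x`, `β` is missing at `y` and `xz` has colour `β`, then either `y` and
`z` are joined by an `α/β`-path avoiding `x`, or swapping `α` and `β` on the `α/β`-component of `x`
makes `β` missing at both ends of `xy`, which can then be coloured. -/
lemma PC.kempe {V κ : Type} {G : SimpleGraph V} {x y z : V} {C : V → V → Option κ}
    (h : PC G x y C) (hno : ¬ ∃ C' : V → V → Option κ, FullCol G C') (α β : κ)
    (hx : ∀ b, C x b ≠ some α) (hy : ∀ b, C y b ≠ some β) (hz : C x z = some β) :
    (kempeGraph x α β C).Reachable y z := by
  by_contra hr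
  apply hno
  let K : V → Prop := fun a => a = x ∨ (kempeGraph x α β C).Reachable a z
  have hKz : K z := Or.inr (SimpleGraph.Reachable.refl z)
  have hKx : K x := Or.inl rfl
  have hKy : ¬ K y := by
    rintro (e | e)
    · exact h.edge.ne e.symm
    · exact hr e
  -- `K` is a union of `α/β`-components, because `xz` is the only `α/β`-edge at `x`.
  have hcl : ∀ a b, (C a b = some α ∨ C a b = some β) → K a → K b := by
    intro a b hab ha
    by_cases hbx : b = x
    · exact Or.inl hbx
    by_cases hax : a = x
    · subst hax
      have : b = z := by
        rcases hab with e | e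
        · exact absurd e (hx b)
        · exact h.proper _ _ _ _ e hz
      exact this ▸ hKz
    · rcases ha with ha | ha
      · exact absurd ha hax
      · refine Or.inr (SimpleGraph.Reachable.trans (SimpleGraph.Adj.reachable ?_) ha)
        have hne : b ≠ a := by
          rintro rfl
          rcases hab with e | e <;> exact (h.adj _ _ _ e).ne rfl
        rw [kempeGraph, SimpleGraph.fromRel_adj]
        exact ⟨hne, Or.inr ⟨hax, hbx, hab⟩⟩
  clear_value K
  let σ : κ → κ := Equiv.swap α β
  have hσα : σ α = β := Equiv.swap_apply_left _ _
  have hσβ : σ β = α := Equiv.swap_apply_right _ _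
  have hσo : ∀ i, i ≠ α → i ≠ β → σ i = i := fun i h1 h2 => Equiv.swap_apply_of_ne_of_ne h1 h2
  have hσinj : ∀ i j, σ i = σ j → i = j := fun i j e => (Equiv.swap α β).injective e
  clear_value σ
  have hne := h.edge.ne
  have hαβ : α ≠ β := fun e => hx z (e ▸ hz)
  let C' : V → V → Option κ := fun a b => if K a ∨ K b then (C a b).map σ else C a b
  have hcl' : ∀ a b, (C a b = some α ∨ C a b = some β) → (K a ↔ K b) := fun a b hab =>
    ⟨hcl a b hab, hcl b a (by rwa [h.symm b a])⟩
  have hC' : ∀ a b, C' a b = if K a then (C a b).map σ else C a b := by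
    intro a b
    have := hcl' a b
    cases hc : C a b with
    | none => simp [C', hc]
    | some i =>
      rw [hc, Option.some.injEq, Option.some.injEq] at this
      by_cases hi : i = α ∨ i = β
      · simp [C', hc, this hi]
      · simp [C', hc, hσo i (fun e => hi (Or.inl e)) (fun e => hi (Or.inr e))]
  have hsymm : ∀ a b, C' a b = C' b a := by
    intro a b
    simp only [C', h.symm a b, or_comm]
  clear_value C'
  have hPC : PC G x y C' := by
    refine ⟨hsymm, ?_, ?_, ?_, ?_, h.edge⟩
    · intro a b i hi
      rw [hC'] at hi
      split_ifs at hi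
      · obtain ⟨j, hj, -⟩ := Option.map_eq_some_iff.mp hi
        exact h.adj a b j hj
      · exact h.adj a b i hi
    · intro a b c i hb hc
      rw [hC'] at hb hc
      split_ifs at hb hc with hK
      · simp only [Option.map_eq_some_iff] at hb hc
        obtain ⟨j, hj, rfl⟩ := hb
        obtain ⟨j', hj', e⟩ := hc
        have := hσinj _ _ e
        subst this
        exact h.proper _ _ _ _ hj hj'
      · exact h.proper _ _ _ _ hb hc
    · intro a b hab hn
      refine h.total a b hab ?_
      rw [hC'] at hn
      split_ifs at hn
      · exact Option.map_eq_none_iff.mp hn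
      · exact hn
    · rw [hC', h.none]; simp
  refine hPC.extend β ?_ ?_
  · intro b hb
    rw [hC', if_pos hKx, Option.map_eq_some_iff] at hb
    obtain ⟨j, hj, e⟩ := hb
    have : j = α := hσinj _ _ (by rw [e, hσα])
    exact hx b (this ▸ hj)
  · intro b hb
    rw [hC', if_neg hKy] at hb
    exact hy b hb

/-! ### Vizing's theorem -/

/-- If one edge is uncoloured and every vertex misses a colour, the edge colouring can be
completed. -/
lemma PC.complete {V κ : Type} [Fintype V] {G : SimpleGraph V} {x y₀ : V}
    {C : V → V → Option κ} (h : PC G x y₀ C) (hmiss : ∀ v, ∃ i, ∀ b, C v b ≠ some i) :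
    ∃ C' : V → V → Option κ, FullCol G C' := by
  by_contra hno
  choose β hβ using hmiss
  have hg : ∀ v, ∃ w, (∃ w', C x w' = some (β v)) → C x w = some (β v) := by
    intro v
    by_cases hw : ∃ w', C x w' = some (β v)
    · exact ⟨hw.choose, fun _ => hw.choose_spec⟩
    · exact ⟨v, fun h => absurd h hw⟩
  choose g hg using hg
  let y : ℕ → V := fun n => g^[n] y₀
  have hy0 : y 0 = y₀ := rfl
  have hyS : ∀ n, y (n + 1) = g (y n) := fun n => Function.iterate_succ_apply' g n y₀
  clear_value y
  let D : ℕ → V → V → Option κ := fun n =>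
    Nat.rec C (fun n Dn => moveCol x (y n) (y (n + 1)) (β (y n)) Dn) n
  have hD0 : D 0 = C := rfl
  have hDS : ∀ n, D (n + 1) = moveCol x (y n) (y (n + 1)) (β (y n)) (D n) := fun n => rfl
  clear_value D
  -- Shifted colourings, valid as long as the fan has no repetition.
  have inv : ∀ n, (∀ i j, i < j → j ≤ n → y i ≠ y j) →
      PC G x (y n) (D n) ∧ (∀ a b, a ≠ x → b ≠ x → D n a b = C a b) ∧
      (∀ v, (∀ l, l ≤ n → v ≠ y l) → D n x v = C x v) ∧
      (∀ l, l < n → D n x (y l) = some (β (y l))) ∧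
      C x (y (n + 1)) = some (β (y n)) ∧
      (∀ i, (∀ b, C x b ≠ some i) → ∀ b, D n x b ≠ some i) ∧
      (∀ b, D n (y n) b ≠ some (β (y n))) := by
    intro n
    induction n with
    | zero =>
      intro _
      rw [hD0, hyS, hy0]
      refine ⟨h, fun _ _ _ _ => rfl, fun _ _ => rfl, fun l hl => absurd hl (by omega), ?_,
        fun _ h => h, hβ _⟩
      by_contra hc
      refine hno (h.extend (β y₀) (fun b hb => hc (hg _ ⟨b, hb⟩)) (hβ _))
    | succ n ih =>
      intro hinj
      obtain ⟨p1, p2, p3, p4, p5, p6, p7⟩ := ih fun i j hij hj => hinj i j hij (by omega)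
      have hfresh : ∀ l, l ≤ n → y (n + 1) ≠ y l := fun l hl =>
        (hinj l (n + 1) (by omega) le_rfl).symm
      have hDz : D n x (y (n + 1)) = some (β (y n)) := by rw [p3 _ hfresh, p5]
      have q1 : PC G x (y (n + 1)) (D (n + 1)) := by
        rw [hDS]; exact p1.move _ p7 hDz
      have hxn : ∀ l, l < n → y l ≠ y n := fun l hl => hinj l n hl (by omega)
      have hxx := p1.edge.ne
      have hxx' := q1.edge.ne
      have q2 : ∀ a b, a ≠ x → b ≠ x → D (n + 1) a b = C a b := by
        intro a b ha hb
        rw [hDS, moveCol, if_neg (by tauto), if_neg (by tauto), p2 a b ha hb]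
      have q4 : ∀ l, l < n + 1 → D (n + 1) x (y l) = some (β (y l)) := by
        intro l hl
        rw [hDS, moveCol]
        rcases Nat.lt_succ_iff_lt_or_eq.mp hl with hl' | rfl
        · have := hxn l hl'
          have := hfresh l (by omega)
          rw [if_neg (by grind), if_neg (by grind), p4 l hl']
        · rw [if_pos (by simp)]
      have q3 : ∀ v, (∀ l, l ≤ n + 1 → v ≠ y l) → D (n + 1) x v = C x v := by
        intro v hv
        have e1 := hv n (by omega)
        have e2 := hv (n + 1) le_rfl
        rw [hDS, moveCol, if_neg (by grind), if_neg (by grind), p3 v fun l hl => hv l (by omega)]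
      have q6 : ∀ i, (∀ b, C x b ≠ some i) → ∀ b, D (n + 1) x b ≠ some i := by
        intro i hi b
        have := p6 i hi b
        have := hi (y (n + 1))
        rw [hDS, moveCol]
        split_ifs
        · rwa [← p5]
        · simp
        · assumption
      have q7 : ∀ b, D (n + 1) (y (n + 1)) b ≠ some (β (y (n + 1))) := by
        intro b
        by_cases hb : b = x
        · rw [hb, q1.symm, q1.none]; simp
        · rw [q2 _ _ hxx'.symm hb]; exact hβ _ b
      refine ⟨q1, q2, q3, q4, ?_, q6, q7⟩
      by_contra hc
      rw [hyS (n + 1)] at hc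
      exact hno (q1.extend _ (q6 _ fun b hb => hc (hg _ ⟨b, hb⟩)) q7)
  have hrep : ∃ m, ∃ j, j < m ∧ y j = y m := by
    obtain ⟨a, b, hab, e⟩ := Finite.exists_ne_map_eq_of_infinite y
    rcases lt_or_gt_of_ne hab with hl | hl
    · exact ⟨b, a, hl, e⟩
    · exact ⟨a, b, hl, e.symm⟩
  obtain ⟨j₁, hj₁, he⟩ := Nat.find_spec hrep
  have hmin : ∀ m, m < Nat.find hrep → ∀ i, i < m → y i ≠ y m := fun m hm i hi e =>
    Nat.find_min hrep hm ⟨i, hi, e⟩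
  generalize Nat.find hrep = m at *
  obtain ⟨k, rfl⟩ : ∃ k, m = k + 1 := ⟨m - 1, by omega⟩
  have hinj : ∀ i j, i < j → j ≤ k → y i ≠ y j := fun i j hij hj => hmin j (by omega) i hij
  obtain ⟨p1, p2, p3, p4, p5, p6, p7⟩ := inv k hinj
  -- `y₀` is not repeated, since `x y₀` has no colour.
  obtain ⟨j, rfl⟩ : ∃ j, j₁ = j + 1 := by
    refine ⟨j₁ - 1, ?_⟩
    have : j₁ ≠ 0 := by
      rintro rfl
      rw [← he, hy0, h.none] at p5
      simp at p5
    omega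
  have hjk : j < k := by omega
  obtain ⟨r1, r2, r3, r4, r5, r6, r7⟩ := inv j fun i l hil hl => hinj i l hil (by omega)
  have hββ : β (y j) = β (y k) := by
    rw [he, p5] at r5
    exact (Option.some.inj r5).symm
  have hα := hβ x
  have hH : ∀ n, (∀ a b, a ≠ x → b ≠ x → D n a b = C a b) →
      kempeGraph x (β x) (β (y j)) (D n) = kempeGraph x (β x) (β (y j)) C := by
    intro n hn
    ext a b
    simp only [kempeGraph, SimpleGraph.fromRel_adj]
    have := hn a b
    have := hn b a
    grind
  have R1 : (kempeGraph x (β x) (β (y j)) C).Reachable (y j) (y (j + 1)) := by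
    rw [← hH j r2]
    refine r1.kempe hno _ _ (r6 _ hα) r7 ?_
    rw [r3 _ fun l hl => (hinj l (j + 1) (by omega) (by omega)).symm, r5]
  have R2 : (kempeGraph x (β x) (β (y j)) C).Reachable (y j) (y k) := by
    rw [← hH k p2]
    refine (p1.kempe hno _ _ (p6 _ hα) ?_ (p4 j hjk)).symm
    rw [hββ]; exact p7
  have hadj : ∀ a b, (kempeGraph x (β x) (β (y j)) C).Adj a b →
      b ≠ x ∧ (C a b = some (β x) ∨ C a b = some (β (y j))) := by
    intro a b hab
    rw [kempeGraph, SimpleGraph.fromRel_adj] at hab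
    have := h.symm a b
    grind
  have hcard : ∀ a i, (Finset.univ.filter fun b => C a b = some i).card ≤ 1 := by
    intro a i
    rw [Finset.card_le_one]
    intro b hb c hc
    exact h.proper a b c i (by simpa using hb) (by simpa using hc)
  have hd2 : ∀ a, (kempeGraph x (β x) (β (y j)) C).degree a ≤ 2 := by
    intro a
    rw [← SimpleGraph.card_neighborFinset_eq_degree]
    calc _ ≤ ((Finset.univ.filter fun b => C a b = some (β x)) ∪
          (Finset.univ.filter fun b => C a b = some (β (y j)))).card := by
            refine Finset.card_le_card fun b hb => ?_
            have := hadj a b (by simpa using hb)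
            simpa using this.2
      _ ≤ 1 + 1 := (Finset.card_union_le _ _).trans (Nat.add_le_add (hcard _ _) (hcard _ _))
  have hd1 : ∀ a, (∀ b, b ≠ x → C a b ≠ some (β (y j))) →
      (kempeGraph x (β x) (β (y j)) C).degree a ≤ 1 := by
    intro a ha
    rw [← SimpleGraph.card_neighborFinset_eq_degree]
    refine (Finset.card_le_card fun b hb => ?_).trans (hcard a (β x))
    have := hadj a b (by simpa using hb)
    have := ha b
    simp only [Finset.mem_filter, Finset.mem_univ, true_and]
    tauto
  have hxj : C (y (j + 1)) x = some (β (y j)) := by rw [h.symm, r5]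
  refine three_leaves _ hd2 (u := y j) (v := y (j + 1)) (w := y k) ?_ ?_ ?_ ?_ ?_ ?_ R1 R2
  · exact hinj _ _ (by omega) (by omega)
  · exact hinj _ _ hjk le_rfl
  · intro e
    rw [e, hββ] at hxj
    exact hβ _ _ hxj
  · exact hd1 _ fun b _ => hβ _ b
  · exact hd1 _ fun b hb e => hb (h.proper _ _ _ _ e hxj)
  · exact hd1 _ fun b _ => hββ ▸ hβ _ b

lemma exists_missing {V : Type} [Fintype V] (G : SimpleGraph V) (Δ : ℕ)
    (hΔ : ∀ v : V, (G.neighborSet v).ncard ≤ Δ) (C : V → V → Option (Fin (Δ + 1)))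
    (hadj : ∀ a b i, C a b = some i → G.Adj a b) (v : V) : ∃ i, ∀ b, C v b ≠ some i := by
  by_contra! hc
  choose f hf using hc
  have hinj : Function.Injective f := fun i j e => by
    have h1 := hf i
    rw [e, hf j] at h1
    exact (Option.some.inj h1).symm
  have h1 : (Set.range f).ncard ≤ (G.neighborSet v).ncard :=
    Set.ncard_le_ncard (by rintro _ ⟨i, rfl⟩; exact hadj _ _ _ (hf i)) (Set.toFinite _)
  rw [← Set.image_univ, Set.ncard_image_of_injective _ hinj, Set.ncard_univ, Nat.card_fin] at h1
  have := hΔ v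
  omega

/-- Vizing's theorem. -/
lemma exists_edgeColouring {V : Type} [Fintype V] (Δ : ℕ) (G : SimpleGraph V)
    (hΔ : ∀ v : V, (G.neighborSet v).ncard ≤ Δ) :
    ∃ C : V → V → Option (Fin (Δ + 1)), FullCol G C := by
  induction hn : G.edgeSet.ncard using Nat.strong_induction_on generalizing G with
  | _ n ih =>
  by_cases hE : ∃ x y, G.Adj x y
  · obtain ⟨x, y, hxy⟩ := hE
    let G' := G.deleteEdges {s(x, y)}
    have hle : G' ≤ G := SimpleGraph.deleteEdges_le _
    have hlt : G'.edgeSet.ncard < n := by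
      rw [← hn]
      refine Set.ncard_lt_ncard ?_ (Set.toFinite _)
      rw [SimpleGraph.edgeSet_ssubset_edgeSet]
      refine lt_of_le_of_ne hle fun e => ?_
      have : G'.Adj x y := e ▸ hxy
      simp [G', SimpleGraph.deleteEdges_adj] at this
    obtain ⟨C, h1, h2, h3, h4⟩ := ih _ hlt G' (fun v => (Set.ncard_le_ncard
      (fun w hw => hle hw) (Set.toFinite _)).trans (hΔ v)) rfl
    have hG' : ∀ a b, G'.Adj a b ↔ G.Adj a b ∧ ¬ ((a = x ∧ b = y) ∨ (a = y ∧ b = x)) := by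
      intro a b
      simp [G', SimpleGraph.deleteEdges_adj]
    have hPC : PC G x y C := by
      refine ⟨h1, fun a b i hi => hle (h2 a b i hi), h3, ?_, ?_, hxy⟩
      · intro a b hab hC
        by_contra hc
        exact h4 a b ((hG' a b).2 ⟨hab, hc⟩) hC
      · by_contra hc
        obtain ⟨i, hi⟩ := Option.ne_none_iff_exists'.mp hc
        exact ((hG' x y).1 (h2 _ _ _ hi)).2 (Or.inl ⟨rfl, rfl⟩)
    exact hPC.complete (exists_missing G Δ hΔ C hPC.adj)
  · push Not at hE
    exact ⟨fun _ _ => none, fun _ _ => rfl, by simp, by simp, fun a b hab => absurd hab (hE a b)⟩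

/-! ### Contracting a matching -/

/-- All edges of a matching can be contracted within the class: `φ` is the quotient map. -/
lemma exists_contraction (𝒢 : ∀ (V : Type) [Fintype V], SimpleGraph V → Prop)
    (hcontract : ∀ (V W : Type) [Fintype V] [Fintype W]
      (G : SimpleGraph V) (H : SimpleGraph W),
      𝒢 V G → IsEdgeContraction G H → 𝒢 W H)
    (V : Type) [Fintype V] (G : SimpleGraph V) (hG : 𝒢 V G) (M : Finset (Sym2 V))
    (hM : ∀ e ∈ M, e ∈ G.edgeSet)
    (hmatch : ∀ a b c, s(a, b) ∈ M → s(a, c) ∈ M → b = c) :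
    ∃ (W : Type) (_ : Fintype W) (H : SimpleGraph W) (φ : V → W), 𝒢 W H ∧
      Function.Surjective φ ∧ (∀ a b, φ a = φ b ↔ a = b ∨ s(a, b) ∈ M) ∧
      (∀ x y : W, H.Adj x y ↔ x ≠ y ∧ ∃ a b : V, φ a = x ∧ φ b = y ∧ G.Adj a b) := by
  induction M using Finset.induction_on with
  | empty =>
    refine ⟨V, inferInstance, G, id, hG, Function.surjective_id, by simp, fun x y => ?_⟩
    simp only [id]
    exact ⟨fun h => ⟨h.ne, x, y, rfl, rfl, h⟩, by rintro ⟨_, a, b, rfl, rfl, h⟩; exact h⟩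
  | insert e M heM ih =>
    obtain ⟨W, instW, H, φ, hH, hsurj, hφ, hadj⟩ := ih (fun e he => hM e (by simp [he]))
      (fun a b c h1 h2 => hmatch a b c (by simp [h1]) (by simp [h2]))
    induction e using Sym2.ind with
    | _ u v =>
    have huv : G.Adj u v := hM s(u, v) (by simp)
    have hne : φ u ≠ φ v := by
      rw [Ne, hφ]
      rintro (e | e)
      · exact huv.ne e
      · exact heM e
    -- The fibres of `φ` over `φ u` and `φ v` are singletons, as `M ∪ {uv}` is a matching.
    have hu : ∀ a, φ a = φ u → a = u := by
      intro a ha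
      rcases (hφ _ _).1 ha with e | e
      · exact e
      · have e' : s(u, a) ∈ M := by rwa [Sym2.eq_swap]
        have := hmatch u a v (by simp [e']) (by simp)
        subst this
        exact absurd e' heM
    have hv : ∀ a, φ a = φ v → a = v := by
      intro a ha
      rcases (hφ _ _).1 ha with e | e
      · exact e
      · have e' : s(v, a) ∈ M := by rwa [Sym2.eq_swap]
        have := hmatch v a u (Finset.mem_insert_of_mem e') (by rw [Sym2.eq_swap]; simp)
        subst this
        exact absurd e heM
    let ψ : W → {w : W // w ≠ φ v} := fun w => if hw : w = φ v then ⟨φ u, hne⟩ else ⟨w, hw⟩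
    have hψ : ∀ w w', ψ w = ψ w' ↔
        w = w' ∨ (w = φ u ∧ w' = φ v) ∨ (w = φ v ∧ w' = φ u) := by
      intro w w'
      simp only [ψ]
      split_ifs <;> simp only [Subtype.mk.injEq] <;> grind
    have hψs : Function.Surjective ψ := fun w => ⟨w, by simp [ψ, w.2]⟩
    clear_value ψ
    let H' : SimpleGraph {w : W // w ≠ φ v} :=
      { Adj := fun x y => x ≠ y ∧ ∃ a b, ψ a = x ∧ ψ b = y ∧ H.Adj a b
        symm := ⟨fun x y ⟨h, a, b, ha, hb, hab⟩ => ⟨h.symm, b, a, hb, ha, hab.symm⟩⟩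
        loopless := ⟨fun x h => h.1 rfl⟩ }
    have hHuv : H.Adj (φ u) (φ v) := (hadj _ _).2 ⟨hne, u, v, rfl, rfl, huv⟩
    refine ⟨_, inferInstance, H', ψ ∘ φ, hcontract W _ H H' hH
      ⟨ψ, φ u, φ v, hHuv, (hψ _ _).2 (Or.inr (Or.inl ⟨rfl, rfl⟩)), hψs, ?_, fun _ _ => Iff.rfl⟩,
      hψs.comp hsurj, ?_, ?_⟩
    · intro a b hab hn
      exact ((hψ a b).1 hab).resolve_left hn
    · intro a b
      simp only [Function.comp, hψ, hφ a b, Finset.mem_insert, Sym2.eq_iff]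
      have := hu a
      have := hu b
      have := hv a
      have := hv b
      grind
    · intro x y
      refine and_congr_right fun hxy => ⟨?_, ?_⟩
      · rintro ⟨a, b, rfl, rfl, hab⟩
        obtain ⟨-, a', b', rfl, rfl, h'⟩ := (hadj _ _).1 hab
        exact ⟨a', b', rfl, rfl, h'⟩
      · rintro ⟨a, b, rfl, rfl, hab⟩
        exact ⟨φ a, φ b, rfl, rfl, (hadj _ _).2 ⟨fun e => hxy (congrArg ψ e), a, b, rfl, rfl, hab⟩⟩

/-! ### Fractional colourings -/

/-- The infimum defining `fracChrom` can be approximated; the content is that the set of weights of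
fractional colourings is nonempty. -/
lemma exists_fracCol_lt {W : Type} [Fintype W] (H : SimpleGraph W) {t : ℝ}
    (ht : fracChrom H < t) :
    ∃ (n : ℕ) (I : Fin n → Set W) (w : Fin n → ℝ), (∀ i, 0 ≤ w i) ∧
      (∀ i, ∀ u ∈ I i, ∀ v ∈ I i, ¬ H.Adj u v) ∧
      (∀ v : W, 1 ≤ ∑ i, Set.indicator (I i) (fun _ => w i) v) ∧ ∑ i, w i < t := by
  suffices hne : Set.Nonempty { c : ℝ | ∃ (n : ℕ) (I : Fin n → Set W) (w : Fin n → ℝ),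
      (∀ i, 0 ≤ w i) ∧ (∀ i, ∀ u ∈ I i, ∀ v ∈ I i, ¬ H.Adj u v) ∧
      (∀ v : W, 1 ≤ ∑ i, Set.indicator (I i) (fun _ => w i) v) ∧ c = ∑ i, w i } by
    obtain ⟨_, ⟨n, I, w, h1, h2, h3, rfl⟩, hlt⟩ := exists_lt_of_csInf_lt hne ht
    exact ⟨n, I, w, h1, h2, h3, hlt⟩
  · let e := Fintype.equivFin W
    refine ⟨_, Fintype.card W, fun i => {e.symm i}, fun _ => 1, by simp, ?_, ?_, rfl⟩
    · rintro i u rfl v rfl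
      exact H.irrefl
    · intro v
      have := Finset.single_le_sum (f := fun i => Set.indicator {e.symm i} (fun _ => (1 : ℝ)) v)
        (fun i _ => Set.indicator_nonneg (by simp) _) (Finset.mem_univ (e v))
      simpa using this

lemma fracChrom_le_of_fintype {α ι : Type} [Fintype ι] (H : SimpleGraph α) (I : ι → Set α)
    (w : ι → ℝ) (h0 : ∀ i, 0 ≤ w i) (hI : ∀ i, ∀ u ∈ I i, ∀ v ∈ I i, ¬ H.Adj u v)
    (hc : ∀ v : α, 1 ≤ ∑ i, Set.indicator (I i) (fun _ => w i) v) :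
    fracChrom H ≤ ∑ i, w i := by
  let e := (Fintype.equivFin ι).symm
  refine csInf_le ⟨0, ?_⟩ ⟨Fintype.card ι, I ∘ e, w ∘ e, fun i => h0 _, fun i => hI _, ?_, ?_⟩
  · rintro _ ⟨n, I, w, h1, -, -, rfl⟩
    exact Finset.sum_nonneg fun i _ => h1 i
  · intro v
    have := e.sum_comp fun i => Set.indicator (I i) (fun _ => w i) v
    simp only [Function.comp]
    rw [this]
    exact hc v
  · exact (e.sum_comp w).symm

/-- The edges of a matching can be fractionally covered by stable sets of `lineSq G` with
total weight arbitrarily close to `c`. -/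
lemma exists_cover_of_matching (𝒢 : ∀ (V : Type) [Fintype V], SimpleGraph V → Prop)
    (hcontract : ∀ (V W : Type) [Fintype V] [Fintype W]
      (G : SimpleGraph V) (H : SimpleGraph W),
      𝒢 V G → IsEdgeContraction G H → 𝒢 W H)
    (c : ℝ)
    (hfrac : ∀ (V : Type) [Fintype V] (G : SimpleGraph V), 𝒢 V G → fracChrom G ≤ c)
    (V : Type) [Fintype V] (G : SimpleGraph V) (hG : 𝒢 V G) (M : Finset (Sym2 V))
    (hM : ∀ e ∈ M, e ∈ G.edgeSet)
    (hmatch : ∀ a b c, s(a, b) ∈ M → s(a, c) ∈ M → b = c) (t : ℝ) (ht : c < t) :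
    ∃ (n : ℕ) (I : Fin n → Set G.edgeSet) (w : Fin n → ℝ), (∀ i, 0 ≤ w i) ∧
      (∀ i, ∀ u ∈ I i, ∀ v ∈ I i, ¬ (lineSq G).Adj u v) ∧
      (∀ e : G.edgeSet, (e : Sym2 V) ∈ M →
        1 ≤ ∑ i, Set.indicator (I i) (fun _ => w i) e) ∧ ∑ i, w i < t := by
  obtain ⟨W, _, H, φ, hH, -, hφ, hadj⟩ := exists_contraction 𝒢 hcontract V G hG M hM hmatch
  obtain ⟨n, I, w, h0, hI, hc, hlt⟩ := exists_fracCol_lt H ((hfrac W H hH).trans_lt ht)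
  have huniq : ∀ e ∈ M, ∀ f ∈ M, ∀ x, x ∈ e → x ∈ f → e = f := by
    intro e he f hf x hxe hxf
    obtain ⟨a, rfl⟩ := hxe
    obtain ⟨b, rfl⟩ := hxf
    rw [hmatch x a b he hf]
  have key : ∀ i, ∀ e f : Sym2 V, e ∈ M → f ∈ M → (∀ x ∈ e, φ x ∈ I i) → (∀ x ∈ f, φ x ∈ I i) →
      ((∃ x, x ∈ e ∧ x ∈ f) ∨ ∃ x y, x ∈ e ∧ y ∈ f ∧ G.Adj x y) → e = f := by
    rintro i e f he hf hei hfi (⟨x, hxe, hxf⟩ | ⟨x, y, hxe, hyf, hxy⟩)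
    · exact huniq e he f hf x hxe hxf
    · by_cases hxy' : φ x = φ y
      · rcases (hφ x y).1 hxy' with e' | e'
        · exact absurd e' hxy.ne
        · rw [huniq e he _ e' x hxe (by simp), huniq f hf _ e' y hyf (by simp)]
      · exact absurd ((hadj _ _).2 ⟨hxy', x, y, rfl, rfl, hxy⟩) (hI i _ (hei x hxe) _ (hfi y hyf))
  refine ⟨n, fun i => {e | (e : Sym2 V) ∈ M ∧ ∀ x ∈ (e : Sym2 V), φ x ∈ I i}, w, h0, ?_, ?_, hlt⟩
  · rintro i e ⟨he, hei⟩ f ⟨hf, hfi⟩ hef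
    rw [lineSq, SimpleGraph.fromRel_adj] at hef
    obtain ⟨hne, h | h⟩ := hef
    · exact hne (Subtype.ext (key i e f he hf hei hfi h))
    · exact hne (Subtype.ext (key i f e hf he hfi hei h).symm)
  · rintro ⟨e, heG⟩ he
    induction e using Sym2.ind with
    | _ a b =>
    have hab : φ a = φ b := (hφ a b).2 (Or.inr he)
    refine (hc (φ a)).trans_eq (Finset.sum_congr rfl fun i _ => ?_)
    have he' : s(a, b) ∈ M := he
    simp only [Set.indicator, Set.mem_ofPred_eq, he', true_and, Sym2.mem_iff, forall_eq_or_imp,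
      forall_eq, ← hab, and_self]

/-- If a class of finite simple graphs is closed under edge contraction and every graph in it
has fractional chromatic number at most `c`, then every graph in the class of maximum degree
`Δ` has fractional strong chromatic index at most `c * (Δ + 1)`. -/
theorem stmt_1 (𝒢 : ∀ (V : Type) [Fintype V], SimpleGraph V → Prop)
    (hcontract : ∀ (V W : Type) [Fintype V] [Fintype W]
      (G : SimpleGraph V) (H : SimpleGraph W),
      𝒢 V G → IsEdgeContraction G H → 𝒢 W H)
    (c : ℝ)
    (hfrac : ∀ (V : Type) [Fintype V] (G : SimpleGraph V), 𝒢 V G → fracChrom G ≤ c)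
    (V : Type) [Fintype V] (G : SimpleGraph V) (hG : 𝒢 V G)
    (Δ : ℕ) (hΔ : ∀ v : V, (G.neighborSet v).ncard ≤ Δ) :
    fracChrom (lineSq G) ≤ c * ((Δ : ℝ) + 1) := by
  obtain ⟨C, hsymm, hadj, hproper, htotal⟩ := exists_edgeColouring Δ G hΔ
  have hΔ0 : (0 : ℝ) < (Δ : ℝ) + 1 := by positivity
  suffices h : ∀ t, c < t → fracChrom (lineSq G) ≤ t * ((Δ : ℝ) + 1) by
    rw [← div_le_iff₀ hΔ0]
    exact le_of_forall_gt_imp_ge_of_dense fun t ht => (div_le_iff₀ hΔ0).2 (h t ht)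
  intro t ht
  let M : Fin (Δ + 1) → Finset (Sym2 V) := fun i =>
    Finset.univ.filter fun e => ∃ a b, e = s(a, b) ∧ C a b = some i
  have hMmem : ∀ i a b, s(a, b) ∈ M i ↔ C a b = some i := by
    intro i a b
    simp only [M, Finset.mem_filter, Finset.mem_univ, true_and]
    refine ⟨?_, fun h => ⟨a, b, rfl, h⟩⟩
    rintro ⟨a', b', e, h⟩
    rcases Sym2.eq_iff.1 e with ⟨rfl, rfl⟩ | ⟨rfl, rfl⟩
    · exact h
    · rwa [hsymm]
  have hcov := fun i => exists_cover_of_matching 𝒢 hcontract c hfrac V G hG (M i)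
    (fun e => Sym2.ind (fun a b h => hadj a b i ((hMmem i a b).1 h)) e)
    (fun a b d h1 h2 => hproper a b d i ((hMmem i a b).1 h1) ((hMmem i a d).1 h2)) t ht
  choose n I w h0 hI hc hlt using hcov
  calc fracChrom (lineSq G)
      ≤ ∑ p : (Σ i, Fin (n i)), w p.1 p.2 := by
        refine fracChrom_le_of_fintype _ (ι := Σ i, Fin (n i)) (fun p => I p.1 p.2)
          (fun p => w p.1 p.2)
          (fun p => h0 _ _) (fun p => hI _ _) ?_
        rintro ⟨e, he⟩
        induction e using Sym2.ind with
        | _ a b =>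
        obtain ⟨i, hi⟩ := Option.ne_none_iff_exists'.mp (htotal a b he)
        rw [Fintype.sum_sigma]
        refine (hc i ⟨s(a, b), he⟩ ((hMmem i a b).2 hi)).trans ?_
        exact Finset.single_le_sum
          (f := fun i => ∑ j, Set.indicator (I i j) (fun _ => w i j) ⟨s(a, b), he⟩)
          (fun i _ => Finset.sum_nonneg fun j _ => Set.indicator_nonneg (fun _ _ => h0 i j) _)
          (Finset.mem_univ i)
    _ = ∑ i, ∑ j, w i j := Fintype.sum_sigma _
    _ ≤ ∑ _i : Fin (Δ + 1), t := Finset.sum_le_sum fun i _ => (hlt i).le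
    _ = t * ((Δ : ℝ) + 1) := by simp [mul_comm]
end

section
/- Let 𝒢 be a class of finite simple graphs that is closed under contraction of edges, and suppose that every graph in 𝒢 has chromatic number at most k. Then every graph G ∈ 𝒢 of maximum degree Δ has strong chromatic index χ₂'(G) ≤ k(Δ+1). -/
section StrongColouring

open Classical

/-! ### Edge-colourings and Kempe swaps -/

/-- `c` is a proper edge-colouring of `H` with colours in `K`. The colour of the edge `xy` is
`c x y`; values of `c` at non-adjacent pairs are irrelevant. -/
structure IsEdgeCol {V κ : Type} (H : SimpleGraph V) (c : V → V → κ) (K : Finset κ) : Prop where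
  symm : ∀ x y, H.Adj x y → c x y = c y x
  inj : ∀ x y z, H.Adj x y → H.Adj x z → c x y = c x z → y = z
  mem : ∀ x y, H.Adj x y → c x y ∈ K

/-- The colour `i` is missing at `u`. -/
def Missing {V κ : Type} (H : SimpleGraph V) (c : V → V → κ) (u : V) (i : κ) : Prop :=
  ∀ y, H.Adj u y → c u y ≠ i

/-- The subgraph of `H` formed by the edges coloured `i` or `j`. -/
def twoCol {V κ : Type} {H : SimpleGraph V} {c : V → V → κ} {K : Finset κ}
    (hc : IsEdgeCol H c K) (i j : κ) : SimpleGraph V where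
  Adj x y := H.Adj x y ∧ (c x y = i ∨ c x y = j)
  symm := ⟨fun x y h => ⟨h.1.symm, by rw [← hc.symm x y h.1]; exact h.2⟩⟩
  loopless := ⟨fun x h => H.loopless.irrefl x h.1⟩

/-- A component of the two-coloured subgraph is a path or a cycle, so at most two of its vertices
miss the colour `i`. The proof counts degrees: every degree is at most `2`, those at vertices
missing `i` are at most `1`, and a connected graph on `m` vertices has degree sum at least
`2 * (m - 1)`. -/
theorem card_missing_le_two {V κ : Type} [Fintype V] {H : SimpleGraph V} {c : V → V → κ}
    {K : Finset κ} (hc : IsEdgeCol H c K) (i j : κ)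
    (C : (twoCol hc i j).ConnectedComponent) (S : Finset V)
    (hS : ∀ x ∈ S, x ∈ C ∧ Missing H c x i) : S.card ≤ 2 := by
  have h1 := C.connected_toSimpleGraph.card_vert_le_card_edgeSet_add_one
  have h2 := C.toSimpleGraph.sum_degrees_eq_twice_card_edges
  have hdeg : ∀ x : C, C.toSimpleGraph.degree x + (if (x : V) ∈ S then 1 else 0) ≤ 2 := by
    intro x
    have key : ∀ T : Finset κ, (∀ y : V, (twoCol hc i j).Adj x y → c x y ∈ T) →
        C.toSimpleGraph.degree x ≤ T.card := by
      intro T hT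
      rw [← SimpleGraph.card_neighborFinset_eq_degree]
      refine Finset.card_le_card_of_injOn (fun y => c x y) ?_ ?_
      · intro y hy
        have hy' : C.toSimpleGraph.Adj x y := by simpa using hy
        exact hT y hy'
      · intro y hy z hz hyz
        have hy' : (twoCol hc i j).Adj x y := by
          have : C.toSimpleGraph.Adj x y := by simpa using hy
          exact this
        have hz' : (twoCol hc i j).Adj x z := by
          have : C.toSimpleGraph.Adj x z := by simpa using hz
          exact this
        exact Subtype.ext (hc.inj _ _ _ hy'.1 hz'.1 hyz)
    split_ifs with hx
    · have := key {j} (fun y hy => by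
        have := (hS x hx).2 y hy.1
        have := hy.2
        simp; tauto)
      simp at this; omega
    · have := key {i, j} (fun y hy => by simpa using hy.2)
      have := Finset.card_le_two (a := i) (b := j)
      omega
  have h3 : ∑ x : C, (if (x : V) ∈ S then 1 else 0) = S.card := by
    rw [Finset.sum_boole]
    simp only [Nat.cast_id]
    refine Finset.card_bij (fun x _ => (x : V)) ?_ ?_ ?_
    · intro x hx; simpa using hx
    · intro x _ y _ h; exact Subtype.ext h
    · intro x hx; exact ⟨⟨x, (hS x hx).1⟩, by simpa using hx, rfl⟩
  have h4 := Finset.sum_le_sum (s := Finset.univ) (fun x _ => hdeg x)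
  rw [Finset.sum_add_distrib, h3, h2] at h4
  simp only [Finset.sum_const, Finset.card_univ, smul_eq_mul] at h4
  rw [Nat.card_eq_fintype_card, Nat.card_eq_fintype_card, ← SimpleGraph.edgeFinset_card] at h1
  omega

/-- Exchanging the colours `i` and `j` on one component of the two-coloured subgraph (a Kempe
swap) preserves properness. -/
theorem IsEdgeCol.swap {V κ : Type} {H : SimpleGraph V} {c : V → V → κ}
    {K : Finset κ} (hc : IsEdgeCol H c K) {i j : κ} (hi : i ∈ K) (hj : j ∈ K)
    (C : (twoCol hc i j).ConnectedComponent) :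
    IsEdgeCol H (fun x y => if x ∈ C then Equiv.swap i j (c x y) else c x y) K := by
  refine ⟨?_, ?_, ?_⟩
  · intro x y h
    have hs := hc.symm x y h
    by_cases hij : c x y = i ∨ c x y = j
    · have hB : (twoCol hc i j).Adj x y := ⟨h, hij⟩
      have : x ∈ C ↔ y ∈ C := by
        exact C.mem_supp_congr_adj hB
      simp [this, hs]
    · have : Equiv.swap i j (c x y) = c x y :=
        Equiv.swap_apply_of_ne_of_ne (by tauto) (by tauto)
      simp [← hs, this]
  · intro x y z hy hz h
    apply hc.inj x y z hy hz
    by_cases hx : x ∈ C <;> simpa [hx] using h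
  · intro x y h
    have := hc.mem x y h
    simp only [Equiv.swap_apply_def]
    split_ifs <;> assumption

/-! ### Vizing's theorem -/

/-- Every vertex `u` of `N` carries a list `L u` of colours of `K` missing at `u`, of size
exactly two, except that the list of `u₀` has size one. -/
structure IsList {V κ : Type} (H : SimpleGraph V) (c : V → V → κ) (K : Finset κ)
    (N : Finset V) (L : V → Finset κ) (u₀ : V) : Prop where
  mem : ∀ u ∈ N, ∀ i ∈ L u, i ∈ K ∧ Missing H c u i
  card : ∀ u ∈ N, (L u).card = if u = u₀ then 1 else 2

/-- After Kempe swaps, some colour lies on exactly one list. Otherwise, the total list size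
`2 * |N| - 1` being odd, some colour `i` lies on at least three lists, and, this total being
less than `2 * |K|`, some colour `j` lies on none. Swapping `i` and `j` on the component of a
vertex with `i` on its list moves `j` onto a list and, since the component holds at most two
vertices missing `i`, leaves `i` on some list. The induction is on the number `n` of colours
on no list. -/
theorem exists_singleton {V κ : Type} [Fintype V] {H : SimpleGraph V} {K : Finset κ}
    {N : Finset V} {u₀ : V} (hu₀ : u₀ ∈ N) (hN : N.card ≤ K.card) (n : ℕ) :
    ∀ (c : V → V → κ) (L : V → Finset κ), IsEdgeCol H c K → IsList H c K N L u₀ →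
      (K.filter fun j => ∀ u ∈ N, j ∉ L u).card = n →
      ∃ (c' : V → V → κ) (L' : V → Finset κ), IsEdgeCol H c' K ∧ IsList H c' K N L' u₀ ∧
        ∃ i ∈ K, ∃ u ∈ N, i ∈ L' u ∧ ∀ w ∈ N, i ∈ L' w → w = u := by
  induction n using Nat.strong_induction_on with
  | _ n ih =>
  intro c L hc hL hn
  by_contra hcon
  have hno : ∀ i ∈ K, (N.filter fun u => i ∈ L u).card ≠ 1 := by
    intro i hi h1
    obtain ⟨u, hu⟩ := Finset.card_eq_one.1 h1
    simp only [Finset.ext_iff, Finset.mem_filter, Finset.mem_singleton] at hu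
    have := (hu u).2 rfl
    exact hcon ⟨c, L, hc, hL, i, hi, u, this.1, this.2, fun w hw hiw => (hu w).1 ⟨hw, hiw⟩⟩
  have hsum : ∑ i ∈ K, (N.filter fun u => i ∈ L u).card + 1 = 2 * N.card := by
    have e1 : ∑ i ∈ K, (N.filter fun u => i ∈ L u).card = ∑ u ∈ N, (L u).card := by
      have := Finset.sum_card_bipartiteAbove_eq_sum_card_bipartiteBelow (s := K) (t := N)
        (fun i u => i ∈ L u)
      unfold Finset.bipartiteAbove Finset.bipartiteBelow at this
      rw [this]
      refine Finset.sum_congr rfl fun u hu => ?_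
      congr 1
      ext i
      simp only [Finset.mem_filter]
      exact ⟨fun h => h.2, fun h => ⟨(hL.mem u hu i h).1, h⟩⟩
    rw [e1, ← Finset.add_sum_erase _ _ hu₀, hL.card _ hu₀,
      Finset.sum_congr rfl (g := fun _ => 2)]
    · have := Finset.card_erase_add_one hu₀
      simp; omega
    · intro u hu
      have := Finset.mem_erase.1 hu
      simp [hL.card u this.2, this.1]
  obtain ⟨i, hi, hi3⟩ : ∃ i ∈ K, 3 ≤ (N.filter fun u => i ∈ L u).card := by
    by_contra! h
    have heven : Even (∑ i ∈ K, (N.filter fun u => i ∈ L u).card) := by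
      refine Finset.even_sum _ fun i hi => ?_
      have h1 := h i hi
      have h2 := hno i hi
      generalize (N.filter fun u => i ∈ L u).card = m at *
      interval_cases m <;> simp_all
    obtain ⟨m, hm⟩ := heven
    omega
  obtain ⟨j, hj, hj0⟩ : ∃ j ∈ K, (N.filter fun u => j ∈ L u).card = 0 := by
    by_contra! h
    have := Finset.sum_le_sum (s := K) (f := fun _ => 2)
      (g := fun i => (N.filter fun u => i ∈ L u).card) (fun i hi => by
        have h1 := h i hi
        have h2 := hno i hi
        omega)
    simp only [Finset.sum_const, smul_eq_mul] at this
    omega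
  have hjL : ∀ u ∈ N, j ∉ L u := by
    intro u hu h
    have := Finset.card_eq_zero.1 hj0
    have h' : u ∈ N.filter fun u => j ∈ L u := by simp [hu, h]
    simp [this] at h'
  obtain ⟨u, hu⟩ : (N.filter fun u => i ∈ L u).Nonempty := Finset.card_pos.1 (by omega)
  obtain ⟨huN, hui⟩ := Finset.mem_filter.1 hu
  let C := (twoCol hc i j).connectedComponentMk u
  have huC : u ∈ C := rfl
  let c' : V → V → κ := fun x y => if x ∈ C then Equiv.swap i j (c x y) else c x y
  let L' : V → Finset κ := fun x => if x ∈ C then (L x).map (Equiv.swap i j).toEmbedding else L x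
  have hc' : IsEdgeCol H c' K := IsEdgeCol.swap hc hi hj C
  have hL' : IsList H c' K N L' u₀ := by
    refine ⟨fun x hx l hl => ?_, fun x hx => ?_⟩
    · by_cases hxC : x ∈ C
      · simp only [L', hxC, if_true, Finset.mem_map, Equiv.coe_toEmbedding] at hl
        obtain ⟨m, hm, rfl⟩ := hl
        obtain ⟨h1, h2⟩ := hL.mem x hx m hm
        refine ⟨?_, fun y hy => ?_⟩
        · simp only [Equiv.swap_apply_def]
          split_ifs <;> assumption
        · simpa [c', hxC] using h2 y hy
      · simp only [L', hxC, if_false] at hl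
        obtain ⟨h1, h2⟩ := hL.mem x hx l hl
        exact ⟨h1, fun y hy => by simpa [c', hxC] using h2 y hy⟩
    · rw [← hL.card x hx]
      simp only [L']
      split_ifs <;> simp
  have huj : j ∈ L' u := by
    simp only [L', huC, if_true, Finset.mem_map, Equiv.coe_toEmbedding]
    exact ⟨i, hui, by simp⟩
  -- at most two of the at least three vertices with `i` on their list lie in `C`
  obtain ⟨w, hw, hwC⟩ : ∃ w ∈ N.filter (fun u => i ∈ L u), w ∉ C := by
    by_contra! h
    have := card_missing_le_two hc i j C (N.filter fun u => i ∈ L u) (fun x hx =>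
      ⟨h x hx, (hL.mem x (Finset.mem_filter.1 hx).1 i (Finset.mem_filter.1 hx).2).2⟩)
    omega
  obtain ⟨hwN, hwi⟩ := Finset.mem_filter.1 hw
  have hwi' : i ∈ L' w := by simpa only [L', hwC, if_false] using hwi
  refine hcon (ih _ ?_ c' L' hc' hL' rfl)
  rw [← hn]
  refine Finset.card_lt_card ?_
  refine (Finset.ssubset_iff_of_subset ?_).2 ⟨j, by simpa [hj] using hjL, ?_⟩
  · intro l hl
    obtain ⟨hlK, hl⟩ := Finset.mem_filter.1 hl
    refine Finset.mem_filter.2 ⟨hlK, fun x hx hlx => ?_⟩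
    have hli : l ≠ i := fun h => hl w hwN (h ▸ hwi')
    have hlj : l ≠ j := fun h => hl u huN (h ▸ huj)
    apply hl x hx
    simp only [L']
    split_ifs
    · exact Finset.mem_map.2 ⟨l, hlx, Equiv.swap_apply_of_ne_of_ne hli hlj⟩
    · exact hlx
  · intro h
    exact (Finset.mem_filter.1 h).2 u huN huj

/-- If `|N| ≤ |K|` and every vertex of `N` misses at least two colours, with at most one exception missing only
one, then `H` can be recoloured so that distinct missing colours can be chosen at the vertices
of `N`; such a choice colours the edges from a new vertex to `N`. The induction gives a colour
lying on a single list to the vertex owning that list, and removes the colour and its edges. -/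
theorem exists_sdr {V κ : Type} [Fintype V] (n : ℕ) :
    ∀ (H : SimpleGraph V) (K : Finset κ) (N : Finset V) (c : V → V → κ) (L : V → Finset κ)
      (u₀ : V), N.card = n → N.card ≤ K.card → IsEdgeCol H c K →
      (∀ u ∈ N, ∀ i ∈ L u, i ∈ K ∧ Missing H c u i) →
      (∀ u ∈ N, (if u = u₀ then 1 else 2) ≤ (L u).card) →
      ∃ (c' : V → V → κ) (f : V → κ), IsEdgeCol H c' K ∧ Set.InjOn f N ∧
        ∀ u ∈ N, f u ∈ K ∧ Missing H c' u (f u) := by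
  induction n with
  | zero =>
    intro H K N c L u₀ hn _ hc _ _
    obtain rfl := Finset.card_eq_zero.1 hn
    exact ⟨c, fun u => c u u, hc, by simp, by simp⟩
  | succ n ih =>
    intro H K N c L u₀ hn hNK hc hL hcard
    -- move the exceptional vertex into `N` and shrink all lists to the prescribed sizes
    obtain ⟨v₀, hv₀, hcard⟩ : ∃ v₀ ∈ N, ∀ u ∈ N, (if u = v₀ then 1 else 2) ≤ (L u).card := by
      by_cases h : u₀ ∈ N
      · exact ⟨u₀, h, hcard⟩
      · obtain ⟨v, hv⟩ : N.Nonempty := Finset.card_pos.1 (by omega)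
        refine ⟨v, hv, fun u hu => ?_⟩
        have := hcard u hu
        rw [if_neg (fun e : u = u₀ => h (e ▸ hu))] at this
        split_ifs <;> omega
    have hsub : ∀ u, ∃ T : Finset κ, u ∈ N → T ⊆ L u ∧ T.card = if u = v₀ then 1 else 2 := by
      intro u
      by_cases hu : u ∈ N
      · obtain ⟨T, hT⟩ := Finset.exists_subset_card_eq (hcard u hu)
        exact ⟨T, fun _ => hT⟩
      · exact ⟨∅, fun h => absurd h hu⟩
    choose T hT using hsub
    obtain ⟨c₁, L₁, hc₁, hL₁, i, hi, u, hu, hiu, huniq⟩ :=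
      exists_singleton hv₀ hNK _ c T hc
        ⟨fun u hu i hi => hL u hu i ((hT u hu).1 hi), fun u hu => (hT u hu).2⟩ rfl
    -- give colour `i` to `u`, and delete this colour
    let H' : SimpleGraph V :=
      { Adj := fun x y => H.Adj x y ∧ c₁ x y ≠ i
        symm := ⟨fun x y h => ⟨h.1.symm, by rw [← hc₁.symm x y h.1]; exact h.2⟩⟩
        loopless := ⟨fun x h => H.loopless.irrefl x h.1⟩ }
    have hNe := Finset.card_erase_add_one hu
    have hKe := Finset.card_erase_add_one hi
    obtain ⟨c₂, f, hc₂, hf, hfm⟩ := ih H' (K.erase i) (N.erase u) c₁ L₁ v₀ (by omega) (by omega)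
      ⟨fun x y h => hc₁.symm x y h.1, fun x y z hy hz h => hc₁.inj x y z hy.1 hz.1 h,
        fun x y h => Finset.mem_erase.2 ⟨h.2, hc₁.mem x y h.1⟩⟩
      (by
        intro w hw l hl
        obtain ⟨hwu, hwN⟩ := Finset.mem_erase.1 hw
        obtain ⟨h1, h2⟩ := hL₁.mem w hwN l hl
        refine ⟨Finset.mem_erase.2 ⟨?_, h1⟩, fun y hy => h2 y hy.1⟩
        rintro rfl
        exact hwu (huniq w hwN hl))
      (fun w hw => (hL₁.card w (Finset.mem_of_mem_erase hw)).ge)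
    have hne : ∀ x y, H.Adj x y → c₁ x y ≠ i → c₂ x y ≠ i := fun x y h h' =>
      (Finset.mem_erase.1 (hc₂.mem x y ⟨h, h'⟩)).1
    refine ⟨fun x y => if c₁ x y = i then i else c₂ x y, fun w => if w = u then i else f w,
      ⟨?_, ?_, ?_⟩, ?_, ?_⟩
    · intro x y h
      have h1 := hc₁.symm x y h
      by_cases h2 : c₁ x y = i
      · simp [← h1, h2]
      · simpa [← h1, h2] using hc₂.symm x y ⟨h, h2⟩
    · intro x y z hy hz h
      by_cases h1 : c₁ x y = i <;> by_cases h2 : c₁ x z = i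
      · exact hc₁.inj x y z hy hz (h1.trans h2.symm)
      · simp only [h1, h2, if_true, if_false] at h
        exact absurd h.symm (hne x z hz h2)
      · simp only [h1, h2, if_true, if_false] at h
        exact absurd h (hne x y hy h1)
      · simp only [h1, h2, if_false] at h
        exact hc₂.inj x y z ⟨hy, h1⟩ ⟨hz, h2⟩ h
    · intro x y h
      by_cases h1 : c₁ x y = i
      · simpa [h1] using hi
      · simpa [h1] using Finset.mem_of_mem_erase (hc₂.mem x y ⟨h, h1⟩)
    · intro w hw z hz h
      have hfi : ∀ w ∈ N, w ≠ u → f w ≠ i := fun w hw hwu =>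
        (Finset.mem_erase.1 (hfm w (Finset.mem_erase.2 ⟨hwu, hw⟩)).1).1
      by_cases h1 : w = u <;> by_cases h2 : z = u
      · rw [h1, h2]
      · simp only [h1, h2, if_true, if_false] at h
        exact absurd h.symm (hfi z hz h2)
      · simp only [h1, h2, if_true, if_false] at h
        exact absurd h (hfi w hw h1)
      · simp only [h1, h2, if_false] at h
        exact hf (Finset.mem_coe.2 (Finset.mem_erase.2 ⟨h1, hw⟩))
          (Finset.mem_coe.2 (Finset.mem_erase.2 ⟨h2, hz⟩)) h
    · intro w hw
      by_cases h1 : w = u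
      · subst h1
        simp only [if_true]
        refine ⟨hi, fun y hy => ?_⟩
        have h2 := (hL₁.mem w hu i hiu).2 y hy
        simpa [h2] using hne w y hy h2
      · obtain ⟨h2, h3⟩ := hfm w (Finset.mem_erase.2 ⟨h1, hw⟩)
        obtain ⟨h4, h5⟩ := Finset.mem_erase.1 h2
        simp only [h1, if_false]
        refine ⟨h5, fun y hy => ?_⟩
        by_cases h6 : c₁ w y = i
        · simpa [h6] using h4.symm
        · simpa [h6] using h3 y ⟨hy, h6⟩

/-- Vizing's theorem: a graph of maximum degree at most `Δ` has a proper edge-colouring with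
`Δ + 1` colours. The vertices are added one at a time. -/
theorem vizing {V : Type} [Fintype V] (G : SimpleGraph V) (Δ : ℕ)
    (hΔ : ∀ v : V, (G.neighborSet v).ncard ≤ Δ) :
    ∃ c : V → V → Fin (Δ + 1), IsEdgeCol G c Finset.univ := by
  -- `R S` consists of the edges of `G` with both ends in `S`
  let R : Finset V → SimpleGraph V := fun S =>
    { Adj := fun x y => G.Adj x y ∧ x ∈ S ∧ y ∈ S
      symm := ⟨fun x y h => ⟨h.1.symm, h.2.2, h.2.1⟩⟩
      loopless := ⟨fun x h => G.loopless.irrefl x h.1⟩ }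
  have hdeg : ∀ v, (Finset.univ.filter fun y => G.Adj v y).card ≤ Δ := by
    intro v
    convert hΔ v
    rw [← Set.ncard_coe_finset]
    congr 1
    ext y; simp
  have main : ∀ S : Finset V, ∃ c : V → V → Fin (Δ + 1), IsEdgeCol (R S) c Finset.univ := by
    intro S
    induction S using Finset.induction_on with
    | empty =>
      exact ⟨fun _ _ => 0, fun _ _ _ => rfl, fun x y z h => absurd h.2.1 (by simp), by simp⟩
    | insert v S hv ih =>
      obtain ⟨c, hc⟩ := ih
      let N := S.filter fun y => G.Adj v y
      have hNle : N.card ≤ Δ :=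
        (Finset.card_le_card (fun y hy => by simpa using (Finset.mem_filter.1 hy).2)).trans
          (hdeg v)
      obtain ⟨c', f, hc', hf, hfm⟩ := exists_sdr N.card (R S) Finset.univ N c
        (fun u => Finset.univ.filter fun i => Missing (R S) c u i) v rfl
        (by simp; omega) hc (by simp) (by
          intro u hu
          obtain ⟨huS, huv⟩ := Finset.mem_filter.1 hu
          -- the neighbours of `u` in `S` do not include `v`, hence number at most `Δ - 1`
          have h1 : (Finset.univ.filter fun y => (R S).Adj u y).card + 1 ≤ Δ := by
            refine le_trans ?_ (hdeg u)
            refine Finset.card_lt_card ?_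
            refine (Finset.ssubset_iff_of_subset ?_).2 ⟨v, by simpa using huv.symm, ?_⟩
            · intro y hy
              simpa using (Finset.mem_filter.1 hy).2.1
            · intro h
              exact hv (Finset.mem_filter.1 h).2.2.2
          have h2 : (Finset.univ.filter fun i => ¬ Missing (R S) c u i).card ≤
              (Finset.univ.filter fun y => (R S).Adj u y).card := by
            refine le_trans (Finset.card_le_card ?_)
              (Finset.card_image_le (f := fun y => c u y))
            intro i hi
            have := (Finset.mem_filter.1 hi).2
            simp only [Missing, not_forall, not_not] at this
            obtain ⟨y, hy, rfl⟩ := this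
            exact Finset.mem_image.2 ⟨y, by simpa using hy, rfl⟩
          have h3 := Finset.card_filter_add_card_filter_not (s := Finset.univ)
            (fun i => Missing (R S) c u i)
          simp only [Finset.card_univ, Fintype.card_fin] at h3
          split_ifs <;> omega)
      have hmemN : ∀ y, (R (insert v S)).Adj v y → y ∈ N := by
        intro y hy
        refine Finset.mem_filter.2 ⟨(Finset.mem_insert.1 hy.2.2).resolve_left ?_, hy.1⟩
        exact hy.1.ne'
      have hold : ∀ x y, (R (insert v S)).Adj x y → x ≠ v → y ≠ v → (R S).Adj x y :=
        fun x y h hx hy => ⟨h.1, (Finset.mem_insert.1 h.2.1).resolve_left hx,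
          (Finset.mem_insert.1 h.2.2).resolve_left hy⟩
      refine ⟨fun x y => if x = v then f y else if y = v then f x else c' x y, ?_, ?_, by simp⟩
      · intro x y h
        have := h.ne
        by_cases hx : x = v <;> by_cases hy : y = v
        · exact absurd (hx.trans hy.symm) this
        · simp [hx, hy]
        · simp [hx, hy]
        · simpa [hx, hy] using hc'.symm x y (hold x y h hx hy)
      · intro x y z hy hz h
        by_cases hx : x = v
        · subst hx
          simp only [if_true] at h
          exact hf (hmemN y hy) (hmemN z hz) h
        · have hxN : ∀ w, w = v → (R (insert v S)).Adj x w → x ∈ N := by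
            rintro w rfl hw
            exact hmemN x hw.symm
          by_cases h1 : y = v <;> by_cases h2 : z = v
          · rw [h1, h2]
          · simp only [hx, h1, h2, if_true, if_false] at h
            exact absurd h.symm ((hfm x (hxN y h1 hy)).2 z (hold x z hz hx h2))
          · simp only [hx, h1, h2, if_true, if_false] at h
            exact absurd h ((hfm x (hxN z h2 hz)).2 y (hold x y hy hx h1))
          · simp only [hx, h1, h2, if_false] at h
            exact hc'.inj x y z (hold x y hy hx h1) (hold x z hz hx h2) h
  obtain ⟨c, hc⟩ := main Finset.univ
  have hR : R Finset.univ = G := by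
    ext x y; simp [R]
  exact ⟨c, hR ▸ hc⟩

/-! ### Contracting a matching -/

/-- Contracting the edges of a matching `M` one by one stays in a contraction-closed class. The map
`φ` is the quotient map, whose nontrivial fibres are the edges of `M`. -/
theorem exists_contract_matching (𝒢 : ∀ (V : Type) [Fintype V], SimpleGraph V → Prop)
    (hcontract : ∀ (V W : Type) [Fintype V] [Fintype W]
      (G : SimpleGraph V) (H : SimpleGraph W),
      𝒢 V G → IsEdgeContraction G H → 𝒢 W H)
    {V : Type} [Fintype V] (G : SimpleGraph V) (hG : 𝒢 V G) (M : Finset (Sym2 V)) :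
    (∀ e ∈ M, e ∈ G.edgeSet) → (∀ e ∈ M, ∀ f ∈ M, ∀ x, x ∈ e → x ∈ f → e = f) →
    ∃ (W : Type) (_ : Fintype W) (H : SimpleGraph W) (φ : V → W), 𝒢 W H ∧
      Function.Surjective φ ∧ (∀ a b, φ a = φ b ↔ a = b ∨ s(a, b) ∈ M) ∧
      ∀ a b, G.Adj a b → φ a ≠ φ b → H.Adj (φ a) (φ b) := by
  induction M using Finset.induction_on with
  | empty =>
    intro _ _
    exact ⟨V, inferInstance, G, id, hG, Function.surjective_id, by simp, fun a b h _ => h⟩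
  | insert e M heM ih =>
    intro hE hM
    obtain ⟨W, _, H, φ, hH, hsurj, hφ, hadj⟩ := ih
      (fun e he => hE e (Finset.mem_insert_of_mem he))
      (fun e he f hf => hM e (Finset.mem_insert_of_mem he) f (Finset.mem_insert_of_mem hf))
    induction e using Sym2.ind with
    | _ u v =>
    have huv : G.Adj u v := hE _ (Finset.mem_insert_self _ _)
    have hoff : ∀ x, x ∈ s(u, v) → ∀ a, φ a = φ x ↔ a = x := by
      intro x hx a
      rw [hφ]
      refine ⟨fun h => h.resolve_right fun h' => heM ?_, Or.inl⟩
      rw [hM s(u, v) (Finset.mem_insert_self _ _) _ (Finset.mem_insert_of_mem h') x hx (by simp)]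
      exact h'
    have hu := hoff u (by simp)
    have hv := hoff v (by simp)
    have hne : φ u ≠ φ v := fun h => huv.ne ((hv u).1 h)
    -- the contracted graph lives on `W` without `φ v`, which is sent to `φ u`
    let ψ : W → {w : W // w ≠ φ v} := fun w => if h : w = φ v then ⟨φ u, hne⟩ else ⟨w, h⟩
    have hψ : ∀ w z, ψ w = ψ z ↔ w = z ∨ (w = φ u ∧ z = φ v) ∨ (w = φ v ∧ z = φ u) := by
      intro w z
      simp only [ψ]
      split_ifs with h1 h2 h2
      · simp [h1, h2]
      · subst h1
        simp only [Subtype.mk.injEq]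
        grind
      · subst h2
        simp only [Subtype.mk.injEq]
        grind
      · simp only [Subtype.mk.injEq]
        grind
    have hψs : Function.Surjective ψ := fun w => ⟨w.1, by simp [ψ, w.2]⟩
    let H' : SimpleGraph {w : W // w ≠ φ v} :=
      { Adj := fun x y => x ≠ y ∧ ∃ a b, ψ a = x ∧ ψ b = y ∧ H.Adj a b
        symm := ⟨fun x y ⟨h, a, b, ha, hb, hab⟩ => ⟨h.symm, b, a, hb, ha, hab.symm⟩⟩
        loopless := ⟨fun x h => h.1 rfl⟩ }
    refine ⟨{w : W // w ≠ φ v}, inferInstance, H', ψ ∘ φ, ?_, hψs.comp hsurj, ?_, ?_⟩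
    · refine hcontract W _ H H' hH ⟨ψ, φ u, φ v, hadj u v huv hne, ?_, hψs, ?_, fun _ _ => Iff.rfl⟩
      · exact (hψ _ _).2 (Or.inr (Or.inl ⟨rfl, rfl⟩))
      · intro a b h hab
        exact ((hψ a b).1 h).resolve_left hab
    · intro a b
      simp only [Function.comp_apply, hψ, hu, hv, Finset.mem_insert, Sym2.eq_iff, hφ]
      tauto
    · intro a b hab h
      exact ⟨h, φ a, φ b, rfl, rfl, hadj a b hab fun h' => h (congrArg ψ h')⟩

end StrongColouring

/-- If a class of finite simple graphs is closed under edge contraction and every graph in it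
has chromatic number at most `k`, then every graph in the class of maximum degree `Δ` has
strong chromatic index at most `k * (Δ + 1)`. -/
theorem stmt_2 (𝒢 : ∀ (V : Type) [Fintype V], SimpleGraph V → Prop)
    (hcontract : ∀ (V W : Type) [Fintype V] [Fintype W]
      (G : SimpleGraph V) (H : SimpleGraph W),
      𝒢 V G → IsEdgeContraction G H → 𝒢 W H)
    (k : ℕ)
    (hchrom : ∀ (V : Type) [Fintype V] (G : SimpleGraph V), 𝒢 V G → G.Colorable k)
    (V : Type) [Fintype V] (G : SimpleGraph V) (hG : 𝒢 V G)
    (Δ : ℕ) (hΔ : ∀ v : V, (G.neighborSet v).ncard ≤ Δ) :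
    (lineSq G).Colorable (k * (Δ + 1)) := by
  classical
  obtain ⟨c, hc⟩ := vizing G Δ hΔ
  -- the colour classes of `c`
  let M : Fin (Δ + 1) → Finset (Sym2 V) := fun i =>
    Finset.univ.filter fun e => ∃ x y, e = s(x, y) ∧ G.Adj x y ∧ c x y = i
  have hMc : ∀ i e, e ∈ M i → ∀ x ∈ e, ∃ y, e = s(x, y) ∧ G.Adj x y ∧ c x y = i := by
    intro i e he x hx
    obtain ⟨a, b, rfl, hab, hi⟩ := (Finset.mem_filter.1 he).2
    rcases Sym2.mem_iff.1 hx with rfl | rfl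
    · exact ⟨b, rfl, hab, hi⟩
    · exact ⟨a, Sym2.eq_swap, hab.symm, by rw [← hc.symm a x hab, hi]⟩
  have hMm : ∀ i, ∀ e ∈ M i, ∀ f ∈ M i, ∀ x, x ∈ e → x ∈ f → e = f := by
    intro i e he f hf x hxe hxf
    obtain ⟨y, rfl, hy, hyi⟩ := hMc i e he x hxe
    obtain ⟨z, rfl, hz, hzi⟩ := hMc i f hf x hxf
    rw [hc.inj x y z hy hz (hyi.trans hzi.symm)]
  have hg : ∀ i, ∃ g : V → Fin k, (∀ a b, s(a, b) ∈ M i → g a = g b) ∧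
      ∀ a b, G.Adj a b → s(a, b) ∉ M i → g a ≠ g b := by
    intro i
    obtain ⟨W, _, H, φ, hH, _, hφ, hadj⟩ := exists_contract_matching 𝒢 hcontract G hG (M i)
      (fun e he => by
        obtain ⟨a, b, rfl, hab, _⟩ := (Finset.mem_filter.1 he).2
        exact hab)
      (hMm i)
    obtain ⟨C⟩ := hchrom W H hH
    refine ⟨fun a => C (φ a), fun a b h => congrArg C ((hφ a b).2 (Or.inr h)), fun a b h hM => ?_⟩
    exact C.valid (hadj a b h fun h' => ((hφ a b).1 h').elim h.ne hM)
  choose g hg1 hg2 using hg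
  have hcol : ∀ e : G.edgeSet, ∃ p : Fin k × Fin (Δ + 1),
      (e : Sym2 V) ∈ M p.2 ∧ ∀ x ∈ (e : Sym2 V), g p.2 x = p.1 := by
    rintro ⟨e, he⟩
    induction e using Sym2.ind with
    | _ a b =>
    have hmem : s(a, b) ∈ M (c a b) := Finset.mem_filter.2 ⟨Finset.mem_univ _, a, b, rfl, he, rfl⟩
    refine ⟨(g (c a b) a, c a b), hmem, fun x hx => ?_⟩
    rcases Sym2.mem_iff.1 hx with rfl | rfl
    · rfl
    · exact (hg1 _ _ _ hmem).symm
  choose p hp1 hp2 using hcol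
  have key : ∀ e f : G.edgeSet, p e = p f →
      ((∃ x, x ∈ (e : Sym2 V) ∧ x ∈ (f : Sym2 V)) ∨
        ∃ x y, x ∈ (e : Sym2 V) ∧ y ∈ (f : Sym2 V) ∧ G.Adj x y) → e = f := by
    intro e f hpe h
    have he := hp1 e
    have hf := hp1 f
    rw [← hpe] at hf
    apply Subtype.ext
    rcases h with ⟨x, hxe, hxf⟩ | ⟨x, y, hxe, hyf, hxy⟩
    · exact hMm _ _ he _ hf x hxe hxf
    · have h1 := hp2 e x hxe
      have h2 := hp2 f y hyf
      rw [← hpe] at h2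
      -- equal colours force the joining edge `xy` itself into the matching
      have hM : s(x, y) ∈ M (p e).2 := by
        by_contra hM
        exact hg2 _ x y hxy hM (h1.trans h2.symm)
      exact (hMm _ _ he _ hM x hxe (by simp)).trans (hMm _ _ hM _ hf y (by simp) hyf)
  have C : (lineSq G).Coloring (Fin k × Fin (Δ + 1)) := SimpleGraph.Coloring.mk p (by
    intro e f hef hpe
    obtain ⟨hne, h | h⟩ := (SimpleGraph.fromRel_adj _ _ _).1 hef
    · exact hne (key e f hpe h)
    · exact hne (key f e hpe.symm h).symm)
  simpa using C.colorable
end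

section
/- Let k ≥ 1 and Δ > k, and let K_{k,Δ} be the simple graph obtained from the complete graph K_k by attaching Δ − k + 1 new pendant edges to every vertex. Then K_{k,Δ} has maximum degree Δ, its entire edge set is a strong clique, and hence its strong clique number satisfies ω₂'(K_{k,Δ}) ≥ k(Δ − k + 1) + k(k−1)/2 = kΔ − k(k−1)/2. -/
/-- The graph obtained from the complete graph on `Fin k` by attaching `m` new pendant
edges to every vertex: the pendant vertex `Sum.inr (i, t)` is joined precisely to `Sum.inl i`. -/
def pendantClique (k m : ℕ) : SimpleGraph (Fin k ⊕ Fin k × Fin m) :=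
  SimpleGraph.fromRel fun x y =>
    (∃ i j : Fin k, i ≠ j ∧ x = Sum.inl i ∧ y = Sum.inl j) ∨
    ∃ i t, x = Sum.inl i ∧ y = Sum.inr (i, t)

theorem pendantClique_adj_inl_inl {k m : ℕ} (i j : Fin k) :
    (pendantClique k m).Adj (Sum.inl i) (Sum.inl j) ↔ i ≠ j := by
  simp only [pendantClique, SimpleGraph.fromRel_adj]
  grind

theorem pendantClique_adj_inl_inr {k m : ℕ} (i : Fin k) (p : Fin k × Fin m) :
    (pendantClique k m).Adj (Sum.inl i) (Sum.inr p) ↔ p.1 = i := by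
  obtain ⟨a, b⟩ := p
  simp [pendantClique, SimpleGraph.fromRel_adj]

theorem pendantClique_not_adj_inr_inr {k m : ℕ} (p q : Fin k × Fin m) :
    ¬ (pendantClique k m).Adj (Sum.inr p) (Sum.inr q) := by
  simp [pendantClique, SimpleGraph.fromRel_adj]

theorem pendantClique_neighborSet_inl_ncard {k m : ℕ} (i : Fin k) :
    ((pendantClique k m).neighborSet (Sum.inl i)).ncard = k - 1 + m := by
  have h : (pendantClique k m).neighborSet (Sum.inl i) =
      (Sum.inl '' ({i}ᶜ : Set (Fin k))) ∪
        ((fun t => Sum.inr (i, t)) '' (Set.univ : Set (Fin m))) := by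
    ext x
    rcases x with j | ⟨j, t⟩
    · simp [pendantClique_adj_inl_inl, eq_comm]
    · simp [pendantClique_adj_inl_inr, eq_comm]
  rw [h, Set.ncard_union_eq, Set.ncard_image_of_injective _ Sum.inl_injective,
    Set.ncard_image_of_injective, Set.ncard_compl]
  · simp
  · intro a b hab
    simpa using hab
  · rw [Set.disjoint_left]
    rintro x ⟨a, -, rfl⟩ ⟨b, -, hb⟩
    simp at hb

theorem pendantClique_neighborSet_inr_ncard {k m : ℕ} (p : Fin k × Fin m) :
    ((pendantClique k m).neighborSet (Sum.inr p)).ncard = 1 := by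
  rw [Set.ncard_eq_one]
  refine ⟨Sum.inl p.1, ?_⟩
  ext x
  rcases x with j | q
  · simp [SimpleGraph.adj_comm _ (Sum.inr p), pendantClique_adj_inl_inr, eq_comm]
  · simp [pendantClique_not_adj_inr_inr]

theorem pendantClique_exists_inl_mem {k m : ℕ} (e : Sym2 (Fin k ⊕ Fin k × Fin m))
    (he : e ∈ (pendantClique k m).edgeSet) : ∃ i, Sum.inl i ∈ e := by
  induction e with
  | _ x y =>
    rw [SimpleGraph.mem_edgeSet] at he
    rcases x with i | p
    · exact ⟨i, by simp⟩
    · rcases y with j | q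
      · exact ⟨j, by simp⟩
      · exact absurd he (pendantClique_not_adj_inr_inr p q)

theorem pendantClique_isStrongCliqueSet (k m : ℕ) :
    IsStrongCliqueSet (pendantClique k m) (pendantClique k m).edgeSet := by
  refine ⟨subset_rfl, fun e he f hf _ => ?_⟩
  obtain ⟨i, hi⟩ := pendantClique_exists_inl_mem e he
  obtain ⟨j, hj⟩ := pendantClique_exists_inl_mem f hf
  by_cases hij : i = j
  · subst hij
    exact Or.inl ⟨_, hi, hj⟩
  · exact Or.inr ⟨_, _, hi, hj, (pendantClique_adj_inl_inl i j).2 hij⟩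

/-- The handshake lemma for `pendantClique k m`. -/
theorem pendantClique_two_mul_edgeSet_ncard (k m : ℕ) :
    2 * (pendantClique k m).edgeSet.ncard = k * (k - 1 + m) + k * m := by
  classical
  have h := (pendantClique k m).sum_degrees_eq_twice_card_edges
  have hd : ∀ v, (pendantClique k m).degree v = ((pendantClique k m).neighborSet v).ncard := by
    intro v
    rw [← SimpleGraph.card_neighborSet_eq_degree, Set.ncard_eq_toFinset_card', Set.toFinset_card]
  simp only [hd, Fintype.sum_sum_type, pendantClique_neighborSet_inl_ncard,
    pendantClique_neighborSet_inr_ncard] at h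
  rw [← SimpleGraph.coe_edgeFinset, Set.ncard_coe_finset, ← h]
  simp

/-- The graph `K_{k,Δ}` obtained from `K_k` by attaching `Δ - k + 1` pendant edges to every
vertex has maximum degree `Δ`, its entire edge set is a strong clique, and hence its strong
clique number is at least `k (Δ - k + 1) + k (k-1)/2 = k Δ - k (k-1)/2`. -/
theorem stmt_3 (k Δ : ℕ) (hk : 1 ≤ k) (hΔ : k < Δ) :
    (∀ v, ((pendantClique k (Δ - k + 1)).neighborSet v).ncard ≤ Δ) ∧
    (∃ v, ((pendantClique k (Δ - k + 1)).neighborSet v).ncard = Δ) ∧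
    IsStrongCliqueSet (pendantClique k (Δ - k + 1)) (pendantClique k (Δ - k + 1)).edgeSet ∧
    k * (Δ - k + 1) + k * (k - 1) / 2 ≤ (pendantClique k (Δ - k + 1)).edgeSet.ncard := by
  have hdeg : k - 1 + (Δ - k + 1) = Δ := by omega
  refine ⟨?_, ⟨Sum.inl ⟨0, hk⟩, ?_⟩, pendantClique_isStrongCliqueSet _ _, ?_⟩
  · rintro (i | p)
    · rw [pendantClique_neighborSet_inl_ncard, hdeg]
    · rw [pendantClique_neighborSet_inr_ncard]
      omega
  · rw [pendantClique_neighborSet_inl_ncard, hdeg]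
  · have h := pendantClique_two_mul_edgeSet_ncard k (Δ - k + 1)
    rw [mul_add] at h
    omega
end

section
/- Let G be a finite simple graph and let Δ > |V(G)|. Let G_Δ be the graph obtained from G by attaching Δ − |V(G)| + 1 new pendant edges to every vertex. Then G_Δ has maximum degree Δ and its fractional strong chromatic index satisfies χ'₂,f(G_Δ) ≥ χ_f(G) · (Δ − |V(G)| + 1). -/
/-- The graph obtained from `G` by attaching `m` new pendant edges to every vertex:
the pendant vertex `Sum.inr (u, t)` is joined precisely to `Sum.inl u`. -/
def addPendants {α : Type} (G : SimpleGraph α) (m : ℕ) : SimpleGraph (α ⊕ α × Fin m) :=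
  SimpleGraph.fromRel fun x y =>
    (∃ u v : α, G.Adj u v ∧ x = Sum.inl u ∧ y = Sum.inl v) ∨
    ∃ u t, x = Sum.inl u ∧ y = Sum.inr (u, t)

/-- The `t`-th pendant edge at the vertex `u`. -/
def pendantEdge {V : Type} (G : SimpleGraph V) {m : ℕ} (u : V) (t : Fin m) :
    (addPendants G m).edgeSet :=
  ⟨s(Sum.inl u, Sum.inr (u, t)), by
    rw [SimpleGraph.mem_edgeSet, addPendants, SimpleGraph.fromRel_adj]
    exact ⟨by simp, Or.inl (Or.inr ⟨u, t, rfl, rfl⟩)⟩⟩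

lemma pendantEdge_inj {V : Type} (G : SimpleGraph V) {m : ℕ} {u v : V} {s t : Fin m}
    (h : pendantEdge G u s = pendantEdge G v t) : u = v ∧ s = t := by
  have h' := congrArg Subtype.val h
  simp only [pendantEdge, Sym2.eq_iff] at h'
  rcases h' with ⟨h1, h2⟩ | ⟨h1, h2⟩
  · simpa using h2
  · cases h1

lemma pendantEdge_adj_same {V : Type} (G : SimpleGraph V) {m : ℕ} (u : V) {s t : Fin m}
    (h : s ≠ t) : (lineSq (addPendants G m)).Adj (pendantEdge G u s) (pendantEdge G u t) := by
  rw [lineSq, SimpleGraph.fromRel_adj]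
  exact ⟨fun e => h (pendantEdge_inj G e).2,
    Or.inl (Or.inl ⟨Sum.inl u, Sym2.mem_mk_left _ _, Sym2.mem_mk_left _ _⟩)⟩

lemma pendantEdge_adj_of_adj {V : Type} (G : SimpleGraph V) {m : ℕ} {u v : V} (s t : Fin m)
    (h : G.Adj u v) :
    (lineSq (addPendants G m)).Adj (pendantEdge G u s) (pendantEdge G v t) := by
  rw [lineSq, SimpleGraph.fromRel_adj]
  refine ⟨fun e => h.ne (pendantEdge_inj G e).1, Or.inl (Or.inr
    ⟨Sum.inl u, Sum.inl v, Sym2.mem_mk_left _ _, Sym2.mem_mk_left _ _, ?_⟩)⟩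
  rw [addPendants, SimpleGraph.fromRel_adj]
  exact ⟨fun e => h.ne (Sum.inl_injective e), Or.inl (Or.inl ⟨u, v, h, rfl, rfl⟩)⟩

/-- The vertices of `G` at which some pendant edge belongs to `I`. -/
def pendantBase {V : Type} (G : SimpleGraph V) {m : ℕ} (I : Set (addPendants G m).edgeSet) :
    Set V :=
  {u | ∃ t, pendantEdge G u t ∈ I}

lemma base_stable {V : Type} (G : SimpleGraph V) {m : ℕ} {I : Set (addPendants G m).edgeSet}
    (hI : ∀ e ∈ I, ∀ f ∈ I, ¬ (lineSq (addPendants G m)).Adj e f) :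
    ∀ u ∈ pendantBase G I, ∀ v ∈ pendantBase G I, ¬ G.Adj u v := by
  rintro u ⟨s, hs⟩ v ⟨t, ht⟩ h
  exact hI _ hs _ ht (pendantEdge_adj_of_adj G s t h)

/-- A stable set contains at most one pendant edge at each vertex. -/
lemma sum_indicator_pendant_le {V : Type} (G : SimpleGraph V) {m : ℕ}
    {I : Set (addPendants G m).edgeSet}
    (hI : ∀ e ∈ I, ∀ f ∈ I, ¬ (lineSq (addPendants G m)).Adj e f) (w : ℝ) (u : V) :
    ∑ t : Fin m, Set.indicator I (fun _ => w) (pendantEdge G u t) ≤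
      Set.indicator (pendantBase G I) (fun _ => w) u := by
  by_cases hu : u ∈ pendantBase G I
  · rw [Set.indicator_of_mem hu]
    obtain ⟨t₀, h₀⟩ := hu
    rw [Finset.sum_eq_single t₀, Set.indicator_of_mem h₀]
    · intro t _ ht
      exact Set.indicator_of_notMem
        (fun hmem => hI _ hmem _ h₀ (pendantEdge_adj_same G u ht)) _
    · simp
  · rw [Set.indicator_of_notMem hu]
    refine (Finset.sum_eq_zero fun t _ => ?_).le
    exact Set.indicator_of_notMem (fun hmem => hu ⟨t, hmem⟩) _

/-- Every fractional colouring bounds `fracChrom` from above. -/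
lemma fracChrom_le {α : Type} (H : SimpleGraph α) {n : ℕ} (I : Fin n → Set α) (w : Fin n → ℝ)
    (hw : ∀ i, 0 ≤ w i) (hI : ∀ i, ∀ u ∈ I i, ∀ v ∈ I i, ¬ H.Adj u v)
    (hc : ∀ v : α, 1 ≤ ∑ i, Set.indicator (I i) (fun _ => w i) v) :
    fracChrom H ≤ ∑ i, w i := by
  refine csInf_le ⟨0, ?_⟩ ⟨n, I, w, hw, hI, hc, rfl⟩
  rintro c ⟨k, J, x, hx, -, -, rfl⟩
  exact Finset.sum_nonneg fun i _ => hx i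

/-- On a finite vertex set some fractional colouring exists (by singletons), so `fracChrom` is a
genuine infimum. -/
lemma le_fracChrom {α : Type} [Finite α] (H : SimpleGraph α) {b : ℝ}
    (hb : ∀ (n : ℕ) (I : Fin n → Set α) (w : Fin n → ℝ), (∀ i, 0 ≤ w i) →
      (∀ i, ∀ u ∈ I i, ∀ v ∈ I i, ¬ H.Adj u v) →
      (∀ v : α, 1 ≤ ∑ i, Set.indicator (I i) (fun _ => w i) v) → b ≤ ∑ i, w i) :
    b ≤ fracChrom H := by
  refine le_csInf ?_ ?_
  · obtain ⟨n, ⟨e⟩⟩ := Finite.exists_equiv_fin α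
    refine ⟨_, n, fun i => {e.symm i}, fun _ => 1, fun _ => zero_le_one, ?_, ?_, rfl⟩
    · rintro i u rfl v rfl
      exact H.loopless.irrefl _
    · intro v
      have h := Finset.single_le_sum (f := fun i : Fin n =>
        Set.indicator ({e.symm i} : Set α) (fun _ => (1 : ℝ)) v)
        (fun i _ => Set.indicator_nonneg (fun _ _ => zero_le_one) _) (Finset.mem_univ (e v))
      simpa using h
  · rintro c ⟨n, I, w, hw, hI, hc, rfl⟩
    exact hb n I w hw hI hc

lemma fracChrom_mul_le {V : Type} [Finite V] (G : SimpleGraph V) {m : ℕ} (hm : 0 < m) :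
    fracChrom G * (m : ℝ) ≤ fracChrom (lineSq (addPendants G m)) := by
  refine le_fracChrom _ fun n I w hw hI hc => ?_
  have hm' : (0 : ℝ) < m := by exact_mod_cast hm
  rw [← le_div_iff₀ hm', Finset.sum_div]
  refine fracChrom_le G (fun i => pendantBase G (I i)) (fun i => w i / m)
    (fun i => div_nonneg (hw i) hm'.le) (fun i => base_stable G (hI i)) fun u => ?_
  have hdiv : ∀ i, Set.indicator (pendantBase G (I i)) (fun _ => w i / (m : ℝ)) u =
      Set.indicator (pendantBase G (I i)) (fun _ => w i) u / m := by
    intro i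
    by_cases h : u ∈ pendantBase G (I i) <;> simp [h]
  simp only [hdiv]
  rw [← Finset.sum_div, le_div_iff₀ hm', one_mul]
  calc (m : ℝ) = ∑ _t : Fin m, (1 : ℝ) := by simp
    _ ≤ ∑ t : Fin m, ∑ i, Set.indicator (I i) (fun _ => w i) (pendantEdge G u t) :=
        Finset.sum_le_sum fun t _ => hc _
    _ = ∑ i, ∑ t : Fin m, Set.indicator (I i) (fun _ => w i) (pendantEdge G u t) :=
        Finset.sum_comm
    _ ≤ _ := Finset.sum_le_sum fun i _ => sum_indicator_pendant_le G (hI i) (w i) u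

lemma ncard_neighborSet_inl_lt {V : Type} [Fintype V] (G : SimpleGraph V) (m : ℕ) (u : V) :
    ((addPendants G m).neighborSet (Sum.inl u)).ncard < Fintype.card V + m := by
  have hsub : (addPendants G m).neighborSet (Sum.inl u) ⊆
      (Sum.inl '' {u}ᶜ) ∪ Set.range (fun t : Fin m => Sum.inr (u, t)) := by
    intro x hx
    rw [SimpleGraph.mem_neighborSet, addPendants, SimpleGraph.fromRel_adj] at hx
    obtain ⟨hne, h⟩ := hx
    rcases x with v | ⟨v, t⟩
    · exact Or.inl ⟨v, fun h => hne (by rw [Set.mem_singleton_iff.1 h]), rfl⟩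
    · right
      simp only [Set.mem_range]
      rcases h with (⟨a, b, -, -, h⟩ | ⟨a, s, h1, h2⟩) | (⟨a, b, -, h, -⟩ | ⟨a, s, h, -⟩)
      · cases h
      · cases h1
        exact ⟨s, h2.symm⟩
      · cases h
      · cases h
  have h1 := (Set.ncard_le_ncard hsub (Set.toFinite _)).trans (Set.ncard_union_le _ _)
  have h2 : (Sum.inl '' ({u}ᶜ : Set V) : Set (V ⊕ V × Fin m)).ncard < Fintype.card V := by
    rw [Set.ncard_image_of_injective _ Sum.inl_injective, ← Nat.card_eq_fintype_card]
    exact Set.ncard_lt_card (by simp)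
  have h3 : (Set.range (fun t : Fin m => (Sum.inr (u, t) : V ⊕ V × Fin m))).ncard ≤ m := by
    rw [← Set.image_univ]
    exact (Set.ncard_image_le Set.finite_univ).trans (by simp)
  omega

lemma ncard_neighborSet_inr_le {V : Type} [Fintype V] (G : SimpleGraph V) (m : ℕ)
    (p : V × Fin m) : ((addPendants G m).neighborSet (Sum.inr p)).ncard ≤ 1 := by
  have hsub : (addPendants G m).neighborSet (Sum.inr p) ⊆ {Sum.inl p.1} := by
    intro x hx
    rw [SimpleGraph.mem_neighborSet, addPendants, SimpleGraph.fromRel_adj] at hx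
    rcases hx.2 with (⟨a, b, -, h, -⟩ | ⟨a, s, h, -⟩) | (⟨a, b, -, -, h⟩ | ⟨a, s, h1, h2⟩)
    · cases h
    · cases h
    · cases h
    · cases h2
      exact h1
  simpa using Set.ncard_le_ncard hsub (Set.toFinite _)

/-- If `Δ > |V(G)|` and `G_Δ` is obtained from `G` by attaching `Δ - |V(G)| + 1` pendant
edges to every vertex, then `G_Δ` has maximum degree `Δ` and its fractional strong chromatic
index is at least `χ_f(G) · (Δ - |V(G)| + 1)`. -/
theorem stmt_4 {V : Type} [Fintype V] (G : SimpleGraph V) (Δ : ℕ)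
    (hΔ : Fintype.card V < Δ) :
    (∀ v, ((addPendants G (Δ - Fintype.card V + 1)).neighborSet v).ncard ≤ Δ) ∧
    fracChrom G * ((Δ : ℝ) - (Fintype.card V : ℝ) + 1) ≤
      fracChrom (lineSq (addPendants G (Δ - Fintype.card V + 1))) := by
  constructor
  · rintro (u | p)
    · have h := ncard_neighborSet_inl_lt G (Δ - Fintype.card V + 1) u
      omega
    · have h := ncard_neighborSet_inr_le G (Δ - Fintype.card V + 1) p
      omega
  · have h := fracChrom_mul_le G (Nat.succ_pos (Δ - Fintype.card V))
    rw [Nat.succ_eq_add_one] at h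
    rwa [Nat.cast_add, Nat.cast_sub hΔ.le, Nat.cast_one] at h
end
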